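/- Let 1 < δ < 2, let q ≥ 2 be an integer and μ ≤ 2−δ a real number. Let b, c, f : [0,1] → ℝ belong to C^{q,μ}(0,1], assume c(x) ≥ 0 for all x ∈ [0,1], let α₁ ≥ 0 and α₀ ≥ 1/(δ−1), and let γ₀, γ₁ ∈ ℝ. Then the boundary value problem −D*^δ u(x) + b(x) u'(x) + c(x) u(x) = f(x) for x ∈ (0,1), with u(0) − α₀ u'(0) = γ₀ and u(1) + α₁ u'(1) = γ₁, has a solution u that is continuously differentiable on [0,1] and (q+1)-times continuously differentiable on (0,1], and there exists a constant C such that for all 0 < x ≤ 1: |u^{(i)}(x)| ≤ C for i = 0, 1, and |u^{(i)}(x)| ≤ C x^{δ−i} for i = 2, 3, …, q+1. Moreover u is the unique solution among all functions g that are continuously differentiable on [0,1], twice continuously differentiable on (0,1], and satisfy |g''(x)| ≤ C' x^{−θ} on (0,1] for some constants C' > 0 and θ ∈ (0,1). -/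

import Mathlib

/-- The Caputo fractional derivative of order `δ ∈ (1,2)` of `g`, using derivatives
within `[0,1]`:  `D*^δ g (x) = (1/Γ(2-δ)) ∫₀ˣ (x-t)^(1-δ) g''(t) dt`. -/
noncomputable def caputoW (δ : ℝ) (g : ℝ → ℝ) (x : ℝ) : ℝ :=
  (1 / Real.Gamma (2 - δ)) *
    ∫ t in (0:ℝ)..x, (x - t) ^ (1 - δ) *
      derivWithin (derivWithin g (Set.Icc 0 1)) (Set.Icc 0 1) t

/-- The class `C^{q,ν}(0,1]`: continuous functions on `[0,1]` that are `q`-times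
continuously differentiable on `(0,1]`, with `|y⁽ⁱ⁾(x)| ≤ C`, `C(1+|ln x|)` or
`C x^{1−ν−i}` according as `i < 1−ν`, `i = 1−ν` or `i > 1−ν`, for `1 ≤ i ≤ q`. -/
def CqNu (q : ℕ) (ν : ℝ) (y : ℝ → ℝ) : Prop :=
  ContinuousOn y (Set.Icc 0 1) ∧ ContDiffOn ℝ q y (Set.Ioc 0 1) ∧
  ∃ C : ℝ, ∀ i : ℕ, 1 ≤ i → i ≤ q → ∀ x ∈ Set.Ioc (0:ℝ) 1,
    (((i:ℝ) < 1 - ν) → |iteratedDerivWithin i y (Set.Icc 0 1) x| ≤ C) ∧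
    (((i:ℝ) = 1 - ν) →
      |iteratedDerivWithin i y (Set.Icc 0 1) x| ≤ C * (1 + |Real.log x|)) ∧
    ((1 - ν < (i:ℝ)) →
      |iteratedDerivWithin i y (Set.Icc 0 1) x| ≤ C * x ^ (1 - ν - i))

open Set MeasureTheory intervalIntegral Filter Topology

noncomputable def Jp (p : ℝ) (g : ℝ → ℝ) (x : ℝ) : ℝ :=
  x ^ p * ∫ s in (0:ℝ)..1, (1 - s) ^ (p - 1) * g (x * s)

def Th (y z : ℝ → ℝ) : Prop :=
  ContinuousOn y (Icc 0 1) ∧ ContinuousOn z (Icc 0 1) ∧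
    ∀ x ∈ Ioo (0:ℝ) 1, HasDerivAt y (z x / x) x

lemma mulmem {x s : ℝ} (hx : x ∈ Icc (0:ℝ) 1) (hs : s ∈ Icc (0:ℝ) 1) :
    x * s ∈ Icc (0:ℝ) 1 :=
  ⟨mul_nonneg hx.1 hs.1, mul_le_one₀ hx.2 hs.1 hs.2⟩

lemma ker_int {p : ℝ} (hp : 0 < p) :
    IntervalIntegrable (fun s : ℝ => (1 - s) ^ (p - 1)) volume 0 1 := by
  have h := (intervalIntegrable_rpow' (a := 1) (b := 0) (r := p - 1) (by linarith)).comp_sub_left 1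
  simpa using h

lemma ker_integral {p : ℝ} (hp : 0 < p) : ∫ s in (0:ℝ)..1, (1 - s) ^ (p - 1) = 1 / p := by
  rw [integral_comp_sub_left (fun x : ℝ => x ^ (p - 1)) 1, integral_rpow (Or.inl (by linarith))]
  simp [Real.zero_rpow hp.ne']

lemma comp_cont {g : ℝ → ℝ} (hg : ContinuousOn g (Icc 0 1)) {x : ℝ} (hx : x ∈ Icc (0:ℝ) 1) :
    ContinuousOn (fun s => g (x * s)) (Icc 0 1) :=
  hg.comp (by fun_prop) (fun _ hs => mulmem hx hs)

lemma J_int {p : ℝ} (hp : 0 < p) {g : ℝ → ℝ} (hg : ContinuousOn g (Icc 0 1)) {x : ℝ}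
    (hx : x ∈ Icc (0:ℝ) 1) :
    IntervalIntegrable (fun s => (1 - s) ^ (p - 1) * g (x * s)) volume 0 1 :=
  (ker_int hp).mul_continuousOn (by simpa using comp_cont hg hx)

lemma J_congr {p : ℝ} {g h : ℝ → ℝ} (e : ∀ t ∈ Icc (0:ℝ) 1, g t = h t) {x : ℝ}
    (hx : x ∈ Icc (0:ℝ) 1) : Jp p g x = Jp p h x := by
  unfold Jp
  congr 1
  apply integral_congr
  intro s hs
  simp only [uIcc_of_le zero_le_one] at hs
  simp only [e _ (mulmem hx hs)]

lemma J_add {p : ℝ} (hp : 0 < p) {g h : ℝ → ℝ} (hg : ContinuousOn g (Icc 0 1))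
    (hh : ContinuousOn h (Icc 0 1)) {x : ℝ} (hx : x ∈ Icc (0:ℝ) 1) :
    Jp p (fun t => g t + h t) x = Jp p g x + Jp p h x := by
  unfold Jp
  rw [← mul_add, ← integral_add (J_int hp hg hx) (J_int hp hh hx)]
  simp only [mul_add]

lemma J_smul {p : ℝ} (k : ℝ) {g : ℝ → ℝ} (x : ℝ) :
    Jp p (fun t => k * g t) x = k * Jp p g x := by
  unfold Jp
  rw [mul_left_comm k, ← intervalIntegral.integral_const_mul k]
  congr 1
  apply integral_congr
  intro s _
  simp only
  ring

lemma J_lin {p : ℝ} (hp : 0 < p) (k : ℝ) {g h : ℝ → ℝ} (hg : ContinuousOn g (Icc 0 1))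
    (hh : ContinuousOn h (Icc 0 1)) {x : ℝ} (hx : x ∈ Icc (0:ℝ) 1) :
    Jp p (fun t => g t + k * h t) x = Jp p g x + k * Jp p h x := by
  rw [J_add hp hg (hh.const_mul k) hx, J_smul]

lemma J_le {p : ℝ} {g : ℝ → ℝ} {G : ℝ → ℝ} {x : ℝ} (hx : x ∈ Icc (0:ℝ) 1)
    (hG : IntervalIntegrable G volume 0 1)
    (h : ∀ s ∈ Ioo (0:ℝ) 1, (1 - s) ^ (p - 1) * |g (x * s)| ≤ G s) :
    |Jp p g x| ≤ x ^ p * ∫ s in (0:ℝ)..1, G s := by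
  unfold Jp
  rw [abs_mul, abs_of_nonneg (Real.rpow_nonneg hx.1 _)]
  apply mul_le_mul_of_nonneg_left _ (Real.rpow_nonneg hx.1 _)
  rw [← Real.norm_eq_abs]
  apply norm_integral_le_of_norm_le zero_le_one _ hG
  have : ∀ᵐ t : ℝ, t ≠ 1 := by simp [ae_iff]
  filter_upwards [this] with t ht1 ht
  have ht' : t ∈ Ioo (0:ℝ) 1 := ⟨ht.1, lt_of_le_of_ne ht.2 ht1⟩
  rw [norm_mul, Real.norm_eq_abs, Real.norm_eq_abs,
    abs_of_nonneg (Real.rpow_nonneg (by linarith [ht'.2]) _)]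
  exact h t ht'

lemma J_bound {p : ℝ} (hp : 0 < p) {g : ℝ → ℝ} {M x : ℝ} (hx : x ∈ Icc (0:ℝ) 1)
    (h : ∀ t ∈ Icc (0:ℝ) x, |g t| ≤ M) : |Jp p g x| ≤ M / p * x ^ p := by
  have h1 := J_le (p := p) (g := g) hx (G := fun s => (1 - s) ^ (p - 1) * M)
    ((ker_int hp).mul_const M) (by
      intro s hs
      apply mul_le_mul_of_nonneg_left _ (Real.rpow_nonneg (by linarith [hs.2]) _)
      exact h _ ⟨mul_nonneg hx.1 hs.1.le, mul_le_of_le_one_right hx.1 hs.2.le⟩)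
  rw [intervalIntegral.integral_mul_const, ker_integral hp] at h1
  calc _ ≤ _ := h1
    _ = _ := by ring

lemma J_w0 {p : ℝ} (hp : 0 < p) {g : ℝ → ℝ} {A L x : ℝ} (hA : 0 ≤ A) (hL : 0 ≤ L)
    (hx : x ∈ Icc (0:ℝ) 1)
    (h : ∀ t ∈ Icc (0:ℝ) 1, |g t| ≤ A * Real.exp (L * t)) :
    |Jp p g x| ≤ A / p * Real.exp (L * x) := by
  have h1 := J_bound (g := g) (M := A * Real.exp (L * x)) hp hx (by
    intro t ht
    refine (h t ⟨ht.1, ht.2.trans hx.2⟩).trans ?_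
    gcongr
    exact ht.2)
  have h2 : x ^ p ≤ 1 := Real.rpow_le_one hx.1 hx.2 hp.le
  have h3 : 0 ≤ A / p * Real.exp (L * x) := by positivity
  calc _ ≤ _ := h1
    _ = A / p * Real.exp (L * x) * x ^ p := by ring
    _ ≤ _ := mul_le_of_le_one_right h3 h2

lemma J_w {p : ℝ} (hp : 0 < p) (hp2 : p ≤ 2) {ε : ℝ} (hε : 0 < ε) :
    ∃ L : ℝ, 0 ≤ L ∧ ∀ (g : ℝ → ℝ) (A : ℝ), 0 ≤ A →
      (∀ t ∈ Icc (0:ℝ) 1, |g t| ≤ A * Real.exp (L * t)) →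
      ∀ x ∈ Icc (0:ℝ) 1, |Jp p g x| ≤ ε * A * Real.exp (L * x) := by
  have ht := (tendsto_rpow_neg_atTop (y := p / 2) (by linarith)).const_mul (2 / p)
  rw [mul_zero] at ht
  obtain ⟨L, hL1, hL⟩ := ((ht.eventually (gt_mem_nhds hε)).and (eventually_gt_atTop 0)).exists
  refine ⟨L, hL.le, fun g A hA h x hx => ?_⟩
  rcases hx.1.eq_or_lt with h0 | h0
  · rw [← h0]; unfold Jp; rw [Real.zero_rpow hp.ne', zero_mul, abs_zero]; positivity
  have key : ∀ y : ℝ, 0 < y → Real.exp (-y) ≤ y ^ (-(p/2)) := by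
    intro y hy
    rw [Real.exp_neg, Real.rpow_neg hy.le]
    apply inv_anti₀ (by positivity)
    rcases le_total y 1 with h1 | h1
    · exact (Real.rpow_le_one hy.le h1 (by linarith)).trans (Real.one_le_exp hy.le)
    · calc y ^ (p/2) ≤ y ^ (1:ℝ) := Real.rpow_le_rpow_of_exponent_le h1 (by linarith)
        _ = y := Real.rpow_one y
        _ ≤ _ := by linarith [Real.add_one_le_exp y]
  have h1 := J_le (p := p) (g := g) hx
    (G := fun s => (1 - s) ^ (p/2 - 1) * (A * Real.exp (L * x) * (L * x) ^ (-(p/2))))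
    ((ker_int (by linarith)).mul_const _) (by
      intro s hs
      have hs1 : 0 < 1 - s := by linarith [hs.2]
      have e1 : |g (x * s)| ≤ A * Real.exp (L * x) * (L * x * (1 - s)) ^ (-(p/2)) := by
        refine (h _ (mulmem hx ⟨hs.1.le, hs.2.le⟩)).trans ?_
        have : Real.exp (L * (x * s)) = Real.exp (L * x) * Real.exp (-(L * x * (1 - s))) := by
          rw [← Real.exp_add]; ring_nf
        rw [this, ← mul_assoc]
        gcongr
        exact key _ (by positivity)
      rw [Real.mul_rpow (by positivity) hs1.le] at e1
      calc _ ≤ (1 - s) ^ (p - 1) * (A * Real.exp (L * x) * ((L * x) ^ (-(p/2)) * (1 - s) ^ (-(p/2)))) := by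
            gcongr
        _ = ((1 - s) ^ (p - 1) * (1 - s) ^ (-(p/2))) * (A * Real.exp (L * x) * (L * x) ^ (-(p/2))) := by ring
        _ = _ := by
            rw [← Real.rpow_add hs1]; ring_nf)
  rw [intervalIntegral.integral_mul_const, ker_integral (by linarith)] at h1
  calc _ ≤ _ := h1
    _ = x ^ p * x ^ (-(p/2)) * (2 / p * L ^ (-(p/2))) * (A * Real.exp (L * x)) := by
        rw [Real.mul_rpow hL.le h0.le]; field_simp
    _ ≤ 1 * ε * (A * Real.exp (L * x)) := by
        have : x ^ p * x ^ (-(p/2)) ≤ 1 := by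
          rw [← Real.rpow_add h0]; exact Real.rpow_le_one hx.1 hx.2 (by linarith)
        gcongr
    _ = _ := by ring

lemma bdd_of_cont {g : ℝ → ℝ} (hg : ContinuousOn g (Icc 0 1)) :
    ∃ M : ℝ, 0 ≤ M ∧ ∀ t ∈ Icc (0:ℝ) 1, |g t| ≤ M := by
  obtain ⟨M, hM⟩ := isCompact_Icc.exists_bound_of_continuousOn hg
  exact ⟨max M 0, le_max_right _ _, fun t ht => (hM t ht).trans (le_max_left _ _)⟩

lemma J_cont {p : ℝ} (hp : 0 < p) {g : ℝ → ℝ} (hg : ContinuousOn g (Icc 0 1)) :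
    ContinuousOn (Jp p g) (Icc 0 1) := by
  obtain ⟨M, hM0, hM⟩ := bdd_of_cont hg
  apply ContinuousOn.mul
  · exact (Real.continuous_rpow_const hp.le).continuousOn
  · intro x hx
    apply continuousWithinAt_of_dominated_interval (bound := fun s => (1 - s) ^ (p - 1) * M)
    · filter_upwards [self_mem_nhdsWithin] with y hy
      exact (J_int hp hg hy).def'.aestronglyMeasurable
    · filter_upwards [self_mem_nhdsWithin] with y hy
      refine ae_of_all _ fun s hs => ?_
      rw [uIoc_of_le zero_le_one] at hs
      rw [norm_mul, Real.norm_eq_abs, Real.norm_eq_abs,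
        abs_of_nonneg (Real.rpow_nonneg (by linarith [hs.2]) _)]
      exact mul_le_mul_of_nonneg_left (hM _ (mulmem hy ⟨hs.1.le, hs.2⟩))
        (Real.rpow_nonneg (by linarith [hs.2]) _)
    · exact (ker_int hp).mul_const M
    · refine ae_of_all _ fun s hs => ?_
      rw [uIoc_of_le zero_le_one] at hs
      have : ContinuousWithinAt (fun y => g (y * s)) (Icc 0 1) x :=
        (hg _ (mulmem hx ⟨hs.1.le, hs.2⟩)).comp (f := fun y => y * s) (by fun_prop)
          (fun y hy => mulmem hy ⟨hs.1.le, hs.2⟩)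
      exact continuousWithinAt_const.mul this

lemma J_Th {p : ℝ} (hp : 0 < p) {y z : ℝ → ℝ} (h : Th y z) :
    Th (Jp p y) (Jp p (fun t => p * y t + z t)) := by
  obtain ⟨hy, hz, hd⟩ := h
  have hc : ContinuousOn (fun t => p * y t + z t) (Icc 0 1) := (hy.const_mul p).add hz
  refine ⟨J_cont hp hy, J_cont hp hc, fun x hx => ?_⟩
  obtain ⟨M, hM0, hM⟩ := bdd_of_cont hz
  have hxI : x ∈ Icc (0:ℝ) 1 := ⟨hx.1.le, hx.2.le⟩
  have D := hasDerivAt_integral_of_dominated_loc_of_deriv_le (μ := volume) (a := 0) (b := 1) (x₀ := x)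
    (F := fun x s => (1 - s) ^ (p - 1) * y (x * s))
    (F' := fun x s => (1 - s) ^ (p - 1) * (z (x * s) / x))
    (s := Ioo (x/2) 1) (bound := fun s => (1 - s) ^ (p - 1) * (M / (x/2)))
    (Ioo_mem_nhds (by linarith [hx.1]) hx.2)
    (by
      filter_upwards [Ioo_mem_nhds hx.1 hx.2] with t ht
      exact (J_int hp hy ⟨ht.1.le, ht.2.le⟩).def'.aestronglyMeasurable)
    (J_int hp hy hxI)
    (by
      have := ((J_int hp hz hxI).div_const x).def'.aestronglyMeasurable
      simpa only [mul_div_assoc] using this)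
    (by
      refine ae_of_all _ fun s hs t ht => ?_
      rw [uIoc_of_le zero_le_one] at hs
      have ht0 : 0 < t := by linarith [ht.1, hx.1]
      have : 0 < x / 2 := by linarith [hx.1]
      rw [norm_mul, Real.norm_eq_abs, Real.norm_eq_abs,
        abs_of_nonneg (Real.rpow_nonneg (by linarith [hs.2]) _)]
      refine mul_le_mul_of_nonneg_left ?_ (Real.rpow_nonneg (by linarith [hs.2]) _)
      rw [abs_div, abs_of_pos ht0]
      exact div_le_div₀ hM0 (hM _ (mulmem ⟨ht0.le, ht.2.le⟩ ⟨hs.1.le, hs.2⟩)) this ht.1.le)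
    ((ker_int hp).mul_const _)
    (by
      have : ∀ᵐ t : ℝ, t ≠ 1 := by simp [ae_iff]
      filter_upwards [this] with s hs1 hs t ht
      rw [uIoc_of_le zero_le_one] at hs
      have hs2 : s < 1 := lt_of_le_of_ne hs.2 hs1
      have ht0 : 0 < t := by linarith [ht.1, hx.1]
      have hs0 := hs.1
      have h1 := (hd (t * s) ⟨by positivity, by nlinarith [ht.2]⟩).comp t
        (hasDerivAt_mul_const s)
      apply HasDerivAt.const_mul
      refine h1.congr_deriv ?_
      have := ht0.ne'
      have := hs0.ne'
      field_simp)
  have D2 := (Real.hasDerivAt_rpow_const (p := p) (Or.inl hx.1.ne')).mul D.2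
  unfold Jp
  refine D2.congr_deriv ?_
  have e : ∫ s in (0:ℝ)..1, (1 - s) ^ (p - 1) * (p * y (x * s) + z (x * s))
      = p * (∫ s in (0:ℝ)..1, (1 - s) ^ (p - 1) * y (x * s))
        + ∫ s in (0:ℝ)..1, (1 - s) ^ (p - 1) * z (x * s) := by
    rw [← intervalIntegral.integral_const_mul, ← integral_add ((J_int hp hy hxI).const_mul p) (J_int hp hz hxI)]
    congr 1; ext s; ring
  have e2 : ∫ s in (0:ℝ)..1, (1 - s) ^ (p - 1) * (z (x * s) / x)
      = (∫ s in (0:ℝ)..1, (1 - s) ^ (p - 1) * z (x * s)) / x := by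
    rw [← intervalIntegral.integral_div]; simp only [mul_div_assoc]
  rw [e, e2, Real.rpow_sub_one hx.1.ne']
  ring

def Reg : ℕ → (ℝ → ℝ) → Prop
  | 0, y => ContinuousOn y (Icc 0 1)
  | n + 1, y => ∃ z, Th y z ∧ Reg n z

lemma Reg.cont {n : ℕ} {y : ℝ → ℝ} (h : Reg n y) : ContinuousOn y (Icc 0 1) := by
  cases n with
  | zero => exact h
  | succ n => obtain ⟨z, h, _⟩ := h; exact h.1

lemma Reg.pred {n : ℕ} : ∀ {y : ℝ → ℝ}, Reg (n + 1) y → Reg n y := by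
  induction n with
  | zero => intro y h; exact h.cont
  | succ n ih => rintro y ⟨z, h, hz⟩; exact ⟨z, h, ih hz⟩

lemma Reg.mono {n m : ℕ} (hm : m ≤ n) {y : ℝ → ℝ} (h : Reg n y) : Reg m y := by
  induction hm with
  | refl => exact h
  | step _ ih => exact ih h.pred

lemma Th.add {y z y' z' : ℝ → ℝ} (h : Th y z) (h' : Th y' z') :
    Th (fun t => y t + y' t) (fun t => z t + z' t) :=
  ⟨h.1.add h'.1, h.2.1.add h'.2.1, fun x hx =>
    ((h.2.2 x hx).add (h'.2.2 x hx)).congr_deriv (by ring)⟩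

lemma Th.mul {y z y' z' : ℝ → ℝ} (h : Th y z) (h' : Th y' z') :
    Th (fun t => y t * y' t) (fun t => z t * y' t + y t * z' t) :=
  ⟨h.1.mul h'.1, (h.2.1.mul h'.1).add (h.1.mul h'.2.1), fun x hx =>
    ((h.2.2 x hx).mul (h'.2.2 x hx)).congr_deriv (by ring)⟩

lemma Th.const (k : ℝ) : Th (fun _ => k) (fun _ => 0) :=
  ⟨continuousOn_const, continuousOn_const, fun x hx =>
    (hasDerivAt_const x k).congr_deriv (by ring)⟩

lemma Th.smul (k : ℝ) {y z : ℝ → ℝ} (h : Th y z) : Th (fun t => k * y t) (fun t => k * z t) :=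
  ⟨h.1.const_mul k, h.2.1.const_mul k, fun x hx =>
    ((h.2.2 x hx).const_mul k).congr_deriv (by ring)⟩

lemma Th.congr {y z y' z' : ℝ → ℝ} (h : Th y z) (e : ∀ t ∈ Icc (0:ℝ) 1, y' t = y t)
    (e' : ∀ t ∈ Icc (0:ℝ) 1, z' t = z t) : Th y' z' :=
  ⟨h.1.congr e, h.2.1.congr e', fun x hx => by
    rw [e' x ⟨hx.1.le, hx.2.le⟩]
    apply (h.2.2 x hx).congr_of_eventuallyEq
    filter_upwards [Ioo_mem_nhds hx.1 hx.2] with t ht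
    exact e t ⟨ht.1.le, ht.2.le⟩⟩

lemma Reg.congr {n : ℕ} {y y' : ℝ → ℝ} (h : Reg n y) (e : ∀ t ∈ Icc (0:ℝ) 1, y' t = y t) :
    Reg n y' := by
  cases n with
  | zero => exact ContinuousOn.congr h e
  | succ n => obtain ⟨z, h, hz⟩ := h; exact ⟨z, h.congr e (fun _ _ => rfl), hz⟩

lemma Reg.add {n : ℕ} : ∀ {y y' : ℝ → ℝ}, Reg n y → Reg n y' → Reg n (fun t => y t + y' t) := by
  induction n with
  | zero => intro y y' h h'; exact ContinuousOn.add h h'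
  | succ n ih =>
    rintro y y' ⟨z, h, hz⟩ ⟨z', h', hz'⟩
    exact ⟨_, h.add h', ih hz hz'⟩

lemma Reg.mul {n : ℕ} : ∀ {y y' : ℝ → ℝ}, Reg n y → Reg n y' → Reg n (fun t => y t * y' t) := by
  induction n with
  | zero => intro y y' h h'; exact ContinuousOn.mul h h'
  | succ n ih =>
    rintro y y' h0 h0'
    have h1 := h0.pred
    have h1' := h0'.pred
    obtain ⟨z, h, hz⟩ := h0
    obtain ⟨z', h', hz'⟩ := h0'
    exact ⟨_, h.mul h', (ih hz h1').add (ih h1 hz')⟩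

lemma Reg.const (n : ℕ) : ∀ (k : ℝ), Reg n (fun _ => k) := by
  induction n with
  | zero => intro k; exact continuousOn_const
  | succ n ih => intro k; exact ⟨_, Th.const k, ih 0⟩

lemma Reg.smul {n : ℕ} (k : ℝ) {y : ℝ → ℝ} (h : Reg n y) : Reg n (fun t => k * y t) :=
  (Reg.const n k).mul h

lemma Reg.J {n : ℕ} {p : ℝ} (hp : 0 < p) : ∀ {y : ℝ → ℝ}, Reg n y → Reg n (Jp p y) := by
  induction n with
  | zero => intro y h; exact J_cont hp h
  | succ n ih =>
    intro y h0
    have h1 := h0.pred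
    obtain ⟨z, h, hz⟩ := h0
    exact ⟨_, J_Th hp h, ih ((h1.smul p).add hz)⟩

/-- the Volterra operator -/
noncomputable def TT (p : ℝ) (b c h : ℝ → ℝ) : ℝ → ℝ :=
  Jp p (fun t => b t * h t + c t * Jp 1 h t)

set_option linter.unusedSectionVars false

section
variable {p : ℝ} (hp : 0 < p) {b c : ℝ → ℝ} (hb : ContinuousOn b (Icc 0 1))
  (hc : ContinuousOn c (Icc 0 1))
include hp hb hc

lemma TT_in {h : ℝ → ℝ} (hh : ContinuousOn h (Icc 0 1)) :
    ContinuousOn (fun t => b t * h t + c t * Jp 1 h t) (Icc 0 1) :=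
  (hb.mul hh).add (hc.mul (J_cont one_pos hh))

lemma TT_cont {h : ℝ → ℝ} (hh : ContinuousOn h (Icc 0 1)) : ContinuousOn (TT p b c h) (Icc 0 1) :=
  J_cont hp (TT_in hp hb hc hh)

omit hp hb hc in
lemma TT_congr {h h' : ℝ → ℝ} (e : ∀ t ∈ Icc (0:ℝ) 1, h t = h' t) {x : ℝ} (hx : x ∈ Icc (0:ℝ) 1) :
    TT p b c h x = TT p b c h' x :=
  J_congr (fun t ht => by simp only [e t ht, J_congr e ht]) hx

lemma TT_lin (k : ℝ) {h h' : ℝ → ℝ} (hh : ContinuousOn h (Icc 0 1))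
    (hh' : ContinuousOn h' (Icc 0 1)) {x : ℝ} (hx : x ∈ Icc (0:ℝ) 1) :
    TT p b c (fun t => h t + k * h' t) x = TT p b c h x + k * TT p b c h' x := by
  unfold TT
  rw [← J_lin hp k (TT_in hp hb hc hh) (TT_in hp hb hc hh') hx]
  apply J_congr _ hx
  intro t ht
  simp only
  rw [J_lin one_pos k hh hh' ht]
  ring

lemma TT_pre : ∃ B : ℝ, 0 ≤ B ∧ ∀ (h : ℝ → ℝ) (A L : ℝ), 0 ≤ A → 0 ≤ L →
      (∀ t ∈ Icc (0:ℝ) 1, |h t| ≤ A * Real.exp (L * t)) →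
      ∀ x ∈ Icc (0:ℝ) 1, |b x * h x + c x * Jp 1 h x| ≤ (B * A) * Real.exp (L * x) := by
  obtain ⟨B, hB0, hB⟩ := bdd_of_cont hb
  obtain ⟨C, hC0, hC⟩ := bdd_of_cont hc
  refine ⟨B + C, by positivity, fun h A L hA hL hh x hx => ?_⟩
  have h1 := J_w0 one_pos hA hL hx hh
  rw [div_one] at h1
  calc _ ≤ |b x| * |h x| + |c x| * |Jp 1 h x| := by
        rw [← abs_mul, ← abs_mul]; exact abs_add_le _ _
    _ ≤ B * (A * Real.exp (L * x)) + C * (A * Real.exp (L * x)) := by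
        gcongr
        exacts [hB x hx, hh x hx, hC x hx]
    _ = _ := by ring

lemma TT_w0 : ∃ B : ℝ, 0 ≤ B ∧ ∀ (h : ℝ → ℝ) (A L : ℝ), 0 ≤ A → 0 ≤ L →
      (∀ t ∈ Icc (0:ℝ) 1, |h t| ≤ A * Real.exp (L * t)) →
      ∀ x ∈ Icc (0:ℝ) 1, |TT p b c h x| ≤ (B * A) * Real.exp (L * x) := by
  obtain ⟨B, hB0, hB⟩ := TT_pre hp hb hc
  refine ⟨B / p, by positivity, fun h A L hA hL hh x hx => ?_⟩
  have := J_w0 hp (by positivity) hL hx (hB h A L hA hL hh)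
  calc _ ≤ _ := this
    _ = _ := by ring

lemma TT_w (hp2 : p ≤ 2) : ∃ L : ℝ, 0 ≤ L ∧ ∀ (h : ℝ → ℝ) (A : ℝ), 0 ≤ A →
      (∀ t ∈ Icc (0:ℝ) 1, |h t| ≤ A * Real.exp (L * t)) →
      ∀ x ∈ Icc (0:ℝ) 1, |TT p b c h x| ≤ (1 / 4 * A) * Real.exp (L * x) := by
  obtain ⟨B, hB0, hB⟩ := TT_pre hp hb hc
  obtain ⟨L, hL, hL2⟩ := J_w hp hp2 (ε := 1 / (4 * (B + 1))) (by positivity)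
  refine ⟨L, hL, fun h A hA hh x hx => ?_⟩
  refine (hL2 _ (B * A) (by positivity) (hB h A L hA hL hh) x hx).trans ?_
  have e : 1 / (4 * (B + 1)) * (B * A) ≤ 1 / 4 * A := by
    rw [div_mul_eq_mul_div, div_le_iff₀ (by positivity)]
    nlinarith
  exact mul_le_mul_of_nonneg_right e (Real.exp_pos _).le

lemma volterra_unique (hp2 : p ≤ 2) {w : ℝ → ℝ} (hw : ContinuousOn w (Icc 0 1))
    (e : ∀ x ∈ Icc (0:ℝ) 1, w x = TT p b c w x) : ∀ x ∈ Icc (0:ℝ) 1, w x = 0 := by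
  obtain ⟨L, hL, hT⟩ := TT_w hp hb hc hp2
  have hc1 : ContinuousOn (fun x => |w x| * Real.exp (-(L * x))) (Icc 0 1) := by fun_prop
  obtain ⟨x0, hx0, hm⟩ := isCompact_Icc.exists_isMaxOn (nonempty_Icc.2 zero_le_one) hc1
  have key : ∀ A x : ℝ, |w x| * Real.exp (-(L * x)) ≤ A ↔ |w x| ≤ A * Real.exp (L * x) := by
    intro A x
    rw [Real.exp_neg, ← div_eq_mul_inv, div_le_iff₀ (Real.exp_pos _)]
  have h0 : 0 ≤ |w x0| * Real.exp (-(L * x0)) := by positivity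
  set A := |w x0| * Real.exp (-(L * x0)) with hA
  have h1 := hT w A h0 (fun t ht => (key _ _).1 (hm ht)) x0 hx0
  rw [← e x0 hx0, ← key] at h1
  have hA0 : A ≤ 0 := by linarith
  intro x hx
  have := (key A x).1 (hm hx)
  have h3 : A * Real.exp (L * x) ≤ 0 := mul_nonpos_of_nonpos_of_nonneg hA0 (Real.exp_pos _).le
  exact abs_nonpos_iff.1 (this.trans h3)

lemma volterra_exists (hp2 : p ≤ 2) {F : ℝ → ℝ} (hF : ContinuousOn F (Icc 0 1)) :
    ∃ w : ℝ → ℝ, Continuous w ∧ ∀ x ∈ Icc (0:ℝ) 1, w x = F x + TT p b c w x := by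
  obtain ⟨L, hL, hT⟩ := TT_w hp hb hc hp2
  let X : C(Icc (0:ℝ) 1, ℝ) → ℝ → ℝ := fun ω t => Real.exp (L * t) * IccExtend zero_le_one ω t
  have hX : ∀ ω, Continuous (X ω) := fun ω => by
    have : Continuous (IccExtend (zero_le_one (α := ℝ)) ω) := ω.continuous.Icc_extend'
    fun_prop
  have hP : ∀ ω, Continuous (fun x : Icc (0:ℝ) 1 =>
      Real.exp (-(L * x)) * (F x + TT p b c (X ω) x)) := by
    intro ω
    have h1 := (hF.add (TT_cont hp hb hc (hX ω).continuousOn)).domRestrict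
    exact (by fun_prop : Continuous fun x : Icc (0:ℝ) 1 => Real.exp (-(L * (x:ℝ)))).mul h1
  let P : C(Icc (0:ℝ) 1, ℝ) → C(Icc (0:ℝ) 1, ℝ) := fun ω => ⟨_, hP ω⟩
  have hPc : ContractingWith (1/2) P := by
    refine ⟨by rw [div_lt_one (by norm_num)]; norm_num, LipschitzWith.of_dist_le_mul fun ω ω' => ?_⟩
    rw [ContinuousMap.dist_le (by positivity)]
    intro x
    have h1 := hT (fun t => X ω t + (-1) * X ω' t) (dist ω ω') dist_nonneg (by
      intro t ht
      have : X ω t + (-1) * X ω' t = (ω ⟨t, ht⟩ - ω' ⟨t, ht⟩) * Real.exp (L * t) := by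
        simp only [X, IccExtend_of_mem _ _ ht]; ring
      rw [this, abs_mul, abs_of_pos (Real.exp_pos _)]
      gcongr
      exact ContinuousMap.dist_apply_le_dist (f := ω) (g := ω') _) x x.2
    rw [TT_lin hp hb hc (-1) (hX ω).continuousOn (hX ω').continuousOn x.2] at h1
    have h2 : dist (P ω x) (P ω' x)
        = |TT p b c (X ω) x + (-1) * TT p b c (X ω') x| * Real.exp (-(L * x)) := by
      rw [Real.dist_eq, ← abs_of_pos (Real.exp_pos (-(L * (x:ℝ)))), ← abs_mul]
      congr 1
      simp only [P, ContinuousMap.coe_mk]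
      ring
    rw [h2, Real.exp_neg, ← div_eq_mul_inv, div_le_iff₀ (Real.exp_pos _)]
    refine h1.trans ?_
    have : (0:ℝ) ≤ dist ω ω' := dist_nonneg
    gcongr
    norm_num
  let ω := hPc.fixedPoint P
  have hω : P ω = ω := hPc.fixedPoint_isFixedPt
  refine ⟨X ω, hX ω, fun x hx => ?_⟩
  have h1 : ω ⟨x, hx⟩ = Real.exp (-(L * x)) * (F x + TT p b c (X ω) x) := by
    conv_lhs => rw [← hω]
    rfl
  have : X ω x = Real.exp (L * x) * ω ⟨x, hx⟩ := by
    simp only [X, IccExtend_of_mem _ _ hx]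
  rw [this, h1, ← mul_assoc, ← Real.exp_add]
  simp

end

lemma TT_Th {p : ℝ} (hp : 0 < p) {b b' c c' h h1 : ℝ → ℝ} (hb : Th b b') (hc : Th c c')
    (hh : Th h h1) :
    Th (TT p b c h) (fun x => TT p b c h1 x +
      TT p (fun t => p * b t + b' t) (fun t => (p + 1) * c t + c' t) h x) := by
  have H := J_Th hp ((hb.mul hh).add (hc.mul (J_Th one_pos hh)))
  refine H.congr (fun t _ => rfl) (fun x hx => ?_)
  unfold TT
  have hb2 : ContinuousOn (fun t => p * b t + b' t) (Icc 0 1) := (hb.1.const_mul p).add hb.2.1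
  have hc2 : ContinuousOn (fun t => (p + 1) * c t + c' t) (Icc 0 1) :=
    (hc.1.const_mul (p + 1)).add hc.2.1
  rw [← J_add hp (TT_in hp hb.1 hc.1 hh.2.1) (TT_in hp hb2 hc2 hh.1) hx]
  apply J_congr _ hx
  intro t ht
  rw [J_add one_pos (hh.1.const_mul 1) hh.2.1 ht, J_smul]
  ring

lemma one_deriv {p : ℝ} (hp : 0 < p) (hp2 : p ≤ 2) {b b' c c' F F' w G : ℝ → ℝ}
    (hb : Th b b') (hc : Th c c') (hF : Th F F')
    (hw : ContinuousOn w (Icc 0 1)) (hG : ContinuousOn G (Icc 0 1))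
    (ew : ∀ x ∈ Icc (0:ℝ) 1, w x = F x + TT p b c w x)
    (eG : ∀ x ∈ Icc (0:ℝ) 1, G x = F' x + TT p b c G x +
      TT p (fun t => p * b t + b' t) (fun t => (p + 1) * c t + c' t) w x) : Th w G := by
  have hb2 : ContinuousOn (fun t => p * b t + b' t) (Icc 0 1) := (hb.1.const_mul p).add hb.2.1
  have hc2 : ContinuousOn (fun t => (p + 1) * c t + c' t) (Icc 0 1) :=
    (hc.1.const_mul (p + 1)).add hc.2.1
  obtain ⟨L, hL, hT⟩ := TT_w hp hb.1 hc.1 hp2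
  obtain ⟨B, hB, hS⟩ := TT_w0 hp hb2 hc2
  obtain ⟨A, hA, hwA⟩ := bdd_of_cont hw
  obtain ⟨A1, hA1, hGA⟩ := bdd_of_cont hG
  set A' := A1 + 4 * (B * A) with hA'
  have hA'0 : 0 ≤ A' := by positivity
  have it : ∀ n : ℕ, ∃ W D : ℝ → ℝ, Th W D ∧
      (∀ t ∈ Icc (0:ℝ) 1, |W t + (-1) * w t| ≤ A * (1/4) ^ n * Real.exp (L * t)) ∧
      (∀ t ∈ Icc (0:ℝ) 1, |D t + (-1) * G t| ≤ A' * (1/2) ^ n * Real.exp (L * t)) := by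
    intro n
    induction n with
    | zero =>
      refine ⟨_, _, Th.const 0, fun t ht => ?_, fun t ht => ?_⟩
      · have h1 := hwA t ht
        have h2 : 1 ≤ Real.exp (L * t) := Real.one_le_exp (mul_nonneg hL ht.1)
        simp only [zero_add, neg_mul, one_mul, abs_neg, pow_zero, mul_one]
        nlinarith
      · have h1 := hGA t ht
        have h2 : 1 ≤ Real.exp (L * t) := Real.one_le_exp (mul_nonneg hL ht.1)
        have h3 : 0 ≤ B * A := by positivity
        simp only [zero_add, neg_mul, one_mul, abs_neg, pow_zero, mul_one]
        nlinarith
    | succ n ih =>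
      obtain ⟨W, D, hWD, i1, i2⟩ := ih
      refine ⟨_, _, hF.add (TT_Th hp hb hc hWD), fun t ht => ?_, fun t ht => ?_⟩
      · have h1 := hT _ (A * (1/4)^n) (by positivity) i1 t ht
        rw [TT_lin hp hb.1 hc.1 (-1) hWD.1 hw ht] at h1
        rw [ew t ht]
        calc _ = |TT p b c W t + -1 * TT p b c w t| := by ring_nf
          _ ≤ _ := h1
          _ = _ := by ring
      · have h1 := hT _ (A' * (1/2)^n) (by positivity) i2 t ht
        rw [TT_lin hp hb.1 hc.1 (-1) hWD.2.1 hG ht] at h1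
        have h2 := hS _ (A * (1/4)^n) L (by positivity) hL i1 t ht
        rw [TT_lin hp hb2 hc2 (-1) hWD.1 hw ht] at h2
        rw [eG t ht]
        have h4 : (1/4 : ℝ) ^ n ≤ (1/2) ^ n := by gcongr; norm_num
        have h5 : B * (A * (1/4)^n) ≤ 1/4 * A' * (1/2)^n := by
          have : 0 ≤ B * A := by positivity
          calc B * (A * (1/4)^n) = (B * A) * (1/4)^n := by ring
            _ ≤ (B * A) * (1/2)^n := by gcongr
            _ ≤ _ := mul_le_mul_of_nonneg_right (by linarith) (by positivity)
        calc _ = |(TT p b c D t + -1 * TT p b c G t) +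
              (TT p (fun t => p * b t + b' t) (fun t => (p + 1) * c t + c' t) W t
              + -1 * TT p (fun t => p * b t + b' t) (fun t => (p + 1) * c t + c' t) w t)| := by
                ring_nf
          _ ≤ _ := abs_add_le _ _
          _ ≤ _ := add_le_add h1 h2
          _ ≤ 1 / 4 * (A' * (1 / 2) ^ n) * Real.exp (L * t) +
            1 / 4 * A' * (1 / 2) ^ n * Real.exp (L * t) := by gcongr
          _ = _ := by ring
  choose W D hWD h1 h2 using it
  refine ⟨hw, hG, fun x hx => ?_⟩
  have hx2 : 0 < x / 2 := by linarith [hx.1]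
  have lim : ∀ (K : ℝ) (r : ℝ), 0 ≤ r → r < 1 → Tendsto (fun n : ℕ => K * r ^ n) atTop (𝓝 0) := by
    intro K r h0 h1
    simpa using (tendsto_pow_atTop_nhds_zero_of_lt_one h0 h1).const_mul K
  apply hasDerivAt_of_tendstoUniformlyOn (l := atTop) (f := W) (f' := fun n t => D n t / t)
    (g' := fun t => G t / t) (s := Ioo (x/2) 1) isOpen_Ioo
  · rw [Metric.tendstoUniformlyOn_iff]
    intro ε hε
    have := lim (A' * Real.exp L / (x/2)) (1/2) (by norm_num) (by norm_num)
    filter_upwards [this.eventually (gt_mem_nhds hε)] with n hn t ht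
    have ht0 : 0 < t := by linarith [ht.1]
    refine lt_of_le_of_lt ?_ hn
    rw [dist_comm, Real.dist_eq, ← sub_div, abs_div, abs_of_pos ht0]
    have h3 := h2 n t ⟨ht0.le, ht.2.le⟩
    have h4 : Real.exp (L * t) ≤ Real.exp L := by
      gcongr; exact mul_le_of_le_one_right hL ht.2.le
    have h5 : |D n t - G t| ≤ A' * (1/2)^n * Real.exp L := by
      calc _ = |D n t + (-1) * G t| := by ring_nf
        _ ≤ _ := h3
        _ ≤ _ := by gcongr
    calc _ ≤ A' * (1/2)^n * Real.exp L / (x/2) :=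
          div_le_div₀ (by positivity) h5 hx2 ht.1.le
      _ = _ := by ring
  · exact Eventually.of_forall fun n t ht =>
      (hWD n).2.2 t ⟨by linarith [ht.1], ht.2⟩
  · intro t ht
    have ht0 : 0 < t := by linarith [ht.1]
    have := lim (A * Real.exp (L * t)) (1/4) (by norm_num) (by norm_num)
    rw [tendsto_iff_dist_tendsto_zero]
    refine squeeze_zero (fun _ => dist_nonneg) (fun n => ?_) this
    calc _ = |W n t + (-1) * w t| := by rw [Real.dist_eq]; ring_nf
      _ ≤ _ := h1 n t ⟨ht0.le, ht.2.le⟩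
      _ = _ := by ring
  · exact ⟨by linarith [hx.1], hx.2⟩

lemma Reg.TT {n : ℕ} {p : ℝ} (hp : 0 < p) {b c h : ℝ → ℝ} (hb : Reg n b) (hc : Reg n c)
    (hh : Reg n h) : Reg n (TT p b c h) :=
  Reg.J hp ((hb.mul hh).add (hc.mul (Reg.J one_pos hh)))

lemma volterra_reg {p : ℝ} (hp : 0 < p) (hp2 : p ≤ 2) (k : ℕ) : ∀ {b c F w : ℝ → ℝ},
    Reg k b → Reg k c → Reg k F → ContinuousOn w (Icc 0 1) →
    (∀ x ∈ Icc (0:ℝ) 1, w x = F x + TT p b c w x) → Reg k w := by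
  induction k with
  | zero => intro b c F w _ _ _ hw _; exact hw
  | succ k ih =>
    intro b c F w hb hc hF hw ew
    have rw1 := ih hb.pred hc.pred hF.pred hw ew
    have rb := hb.pred
    have rc := hc.pred
    obtain ⟨b', hb, hb'⟩ := hb
    obtain ⟨c', hc, hc'⟩ := hc
    obtain ⟨F', hF, hF'⟩ := hF
    have r1 := Reg.TT hp ((rb.smul p).add hb') ((rc.smul (p + 1)).add hc') rw1
    have rF2 := hF'.add r1
    obtain ⟨G, hG, eG⟩ := volterra_exists hp hb.1 hc.1 hp2 rF2.cont
    refine ⟨G, ?_, ih rb rc rF2 hG.continuousOn eG⟩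
    refine one_deriv hp hp2 hb hc hF hw hG.continuousOn ew fun x hx => ?_
    rw [eG x hx]
    ring

lemma J_eq {p : ℝ} {g : ℝ → ℝ} {x : ℝ} (hx : 0 < x) :
    Jp p g x = ∫ t in (0:ℝ)..x, (x - t) ^ (p - 1) * g t := by
  have h := integral_comp_mul_left (a := 0) (b := 1) (fun t => (x - t) ^ (p - 1) * g t) hx.ne'
  rw [mul_zero, mul_one, smul_eq_mul] at h
  have h2 : ∫ s in (0:ℝ)..1, (x - x * s) ^ (p - 1) * g (x * s)
      = x ^ (p - 1) * ∫ s in (0:ℝ)..1, (1 - s) ^ (p - 1) * g (x * s) := by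
    rw [← intervalIntegral.integral_const_mul]
    apply integral_congr
    intro s hs
    rw [uIcc_of_le zero_le_one] at hs
    simp only
    rw [show x - x * s = x * (1 - s) by ring, Real.mul_rpow hx.le (by linarith [hs.2])]
    ring
  rw [h2] at h
  unfold Jp
  rw [Real.rpow_sub_one hx.ne'] at h
  have hx' := hx.ne'
  field_simp at h
  exact h

lemma J_zero {p : ℝ} (hp : 0 < p) (g : ℝ → ℝ) : Jp p g 0 = 0 := by
  unfold Jp; rw [Real.zero_rpow hp.ne', zero_mul]

lemma J1_eq {g : ℝ → ℝ} {x : ℝ} (hx : 0 ≤ x) : Jp 1 g x = ∫ t in (0:ℝ)..x, g t := by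
  rcases hx.eq_or_lt with h | h
  · rw [← h, J_zero one_pos]; simp
  · rw [J_eq h]; simp

lemma J1_deriv {g : ℝ → ℝ} (hg : ContinuousOn g (Icc 0 1)) {x : ℝ} (hx : x ∈ Ioo (0:ℝ) 1) :
    HasDerivAt (Jp 1 g) (g x) x := by
  have h : HasDerivAt (fun x => ∫ t in (0:ℝ)..x, g t) (g x) x := by
    apply integral_hasDerivAt_right
    · apply ContinuousOn.intervalIntegrable
      rw [uIcc_of_le hx.1.le]
      exact hg.mono (Icc_subset_Icc_right hx.2.le)
    · exact (hg.mono Ioo_subset_Icc_self).stronglyMeasurableAtFilter isOpen_Ioo x hx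
    · exact hg.continuousAt (Icc_mem_nhds hx.1 hx.2)
  apply h.congr_of_eventuallyEq
  filter_upwards [Ioi_mem_nhds hx.1] with t ht
  exact J1_eq (le_of_lt ht)

lemma beta_real {p r : ℝ} (hp : 0 < p) (hr : 0 ≤ r) :
    ∫ s in (0:ℝ)..1, (1 - s) ^ (p - 1) * s ^ r
      = Real.Gamma p * Real.Gamma (r + 1) / Real.Gamma (p + r + 1) := by
  have h := Complex.betaIntegral_eq_Gamma_mul_div ((r + 1 : ℝ) : ℂ) (p : ℂ)
    (by simp; linarith) (by simpa using hp)
  rw [← Complex.ofReal_add, Complex.Gamma_ofReal, Complex.Gamma_ofReal, Complex.Gamma_ofReal] at h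
  have h2 : Complex.betaIntegral ((r + 1 : ℝ) : ℂ) (p : ℂ)
      = ((∫ s in (0:ℝ)..1, (1 - s) ^ (p - 1) * s ^ r : ℝ) : ℂ) := by
    rw [← intervalIntegral.integral_ofReal, Complex.betaIntegral]
    apply integral_congr
    intro s hs
    rw [uIcc_of_le zero_le_one] at hs
    simp only
    rw [Complex.ofReal_mul, Complex.ofReal_cpow (by linarith [hs.2]), Complex.ofReal_cpow hs.1]
    push_cast
    ring_nf
  rw [h2] at h
  have h3 : (∫ s in (0:ℝ)..1, (1 - s) ^ (p - 1) * s ^ r)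
      = Real.Gamma (r + 1) * Real.Gamma p / Real.Gamma (r + 1 + p) := by
    exact_mod_cast h
  rw [h3]
  ring_nf

lemma J_pow {p r : ℝ} (hp : 0 < p) (hr : 0 ≤ r) {x : ℝ} (hx : x ∈ Icc (0:ℝ) 1) :
    Jp p (fun t => t ^ r) x
      = (Real.Gamma p * Real.Gamma (r + 1) / Real.Gamma (p + r + 1)) * x ^ (p + r) := by
  rcases hx.1.eq_or_lt with h0 | h0
  · rw [← h0, J_zero hp, Real.zero_rpow (by linarith), mul_zero]
  unfold Jp
  have : ∫ s in (0:ℝ)..1, (1 - s) ^ (p - 1) * (x * s) ^ r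
      = x ^ r * ∫ s in (0:ℝ)..1, (1 - s) ^ (p - 1) * s ^ r := by
    rw [← intervalIntegral.integral_const_mul]
    apply integral_congr
    intro s hs
    rw [uIcc_of_le zero_le_one] at hs
    simp only
    rw [Real.mul_rpow hx.1 hs.1]
    ring
  rw [this, beta_real hp hr, Real.rpow_add h0]
  ring

lemma abel_poly {k : ℝ} (hk : 0 < k) (hk1 : k < 1) (P : Polynomial ℝ) {x : ℝ}
    (hx : x ∈ Icc (0:ℝ) 1) :
    Jp (1 - k) (Jp k (fun t => P.eval t)) x
      = Real.Gamma k * Real.Gamma (1 - k) * Jp 1 (fun t => P.eval t) x := by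
  have hk' : 0 < 1 - k := by linarith
  induction P using Polynomial.induction_on' with
  | add P Q hP hQ =>
    have cP : ContinuousOn (fun t => P.eval t) (Icc (0:ℝ) 1) := P.continuous.continuousOn
    have cQ : ContinuousOn (fun t => Q.eval t) (Icc (0:ℝ) 1) := Q.continuous.continuousOn
    simp only [Polynomial.eval_add]
    rw [J_add one_pos cP cQ hx, J_congr (fun t ht => J_add hk cP cQ ht) hx,
      J_add hk' (J_cont hk cP) (J_cont hk cQ) hx, hP, hQ]
    ring
  | monomial n a =>
    have e : ∀ p : ℝ, 0 < p → ∀ t ∈ Icc (0:ℝ) 1, Jp p (fun t => (Polynomial.monomial n a).eval t) t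
        = a * (Real.Gamma p * Real.Gamma (n + 1) / Real.Gamma (p + n + 1)) * t ^ (p + n) := by
      intro p hp t ht
      simp only [Polynomial.eval_monomial]
      rw [J_smul]
      have := J_pow hp (Nat.cast_nonneg n) ht
      simp only [Real.rpow_natCast] at this
      rw [this]; ring
    rw [e 1 one_pos x hx, J_congr (e k hk) hx, J_smul, J_pow hk' (by positivity) hx]
    have g1 : Real.Gamma (k + n + 1) ≠ 0 := (Real.Gamma_pos_of_pos (by positivity)).ne'
    have g2 : Real.Gamma (1 + n + 1) ≠ 0 := (Real.Gamma_pos_of_pos (by positivity)).ne'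
    rw [show 1 - k + (k + (n:ℝ)) = 1 + n by ring, Real.Gamma_one]
    field_simp

lemma abel {k : ℝ} (hk : 0 < k) (hk1 : k < 1) {g : ℝ → ℝ} (hg : ContinuousOn g (Icc 0 1)) {x : ℝ}
    (hx : x ∈ Icc (0:ℝ) 1) :
    Jp (1 - k) (Jp k g) x = Real.Gamma k * Real.Gamma (1 - k) * Jp 1 g x := by
  have hk' : 0 < 1 - k := by linarith
  set c := Real.Gamma k * Real.Gamma (1 - k) with hc
  have c0 : 0 < c := mul_pos (Real.Gamma_pos_of_pos hk) (Real.Gamma_pos_of_pos hk')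
  have bd : ∀ p : ℝ, 0 < p → ∀ (h : ℝ → ℝ) (M : ℝ), 0 ≤ M → (∀ t ∈ Icc (0:ℝ) 1, |h t| ≤ M) →
      ∀ t ∈ Icc (0:ℝ) 1, |Jp p h t| ≤ M / p := by
    intro p hp h M hM hh t ht
    have := J_w0 (L := 0) hp hM le_rfl ht (by simpa using hh)
    simpa using this
  rw [← sub_eq_zero, ← abs_nonpos_iff]
  have key : ∀ ε : ℝ, 0 < ε → |Jp (1 - k) (Jp k g) x - c * Jp 1 g x| ≤
      (1 / k / (1 - k) + c) * ε := by
    intro ε hε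
    obtain ⟨P, hP⟩ := exists_polynomial_near_of_continuousOn 0 1 g hg ε hε
    have cP : ContinuousOn (fun t => P.eval t) (Icc (0:ℝ) 1) := P.continuous.continuousOn
    have hP' : ∀ t ∈ Icc (0:ℝ) 1, |g t + (-1) * P.eval t| ≤ ε := by
      intro t ht
      have := (hP t ht).le
      rw [abs_sub_comm] at this
      calc _ = |g t - P.eval t| := by ring_nf
        _ ≤ _ := this
    have b1 := bd k hk _ ε hε.le hP'
    have b2 := bd (1 - k) hk' _ (ε / k) (by positivity) b1 x hx
    have b3 := bd 1 one_pos _ ε hε.le hP' x hx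
    rw [J_congr (fun t ht => J_lin hk (-1) hg cP ht) hx,
      J_lin hk' (-1) (J_cont hk hg) (J_cont hk cP) hx, abel_poly hk hk1 P hx, ← hc] at b2
    rw [J_lin one_pos (-1) hg cP hx] at b3
    set a1 := Jp (1 - k) (Jp k g) x
    set a2 := Jp 1 g x
    set a3 := Jp 1 (fun t => P.eval t) x
    calc |a1 - c * a2| = |(a1 + -1 * (c * a3)) - c * (a2 + -1 * a3)| := by ring_nf
      _ ≤ |a1 + -1 * (c * a3)| + |c * (a2 + -1 * a3)| := abs_sub _ _
      _ ≤ ε / k / (1 - k) + c * (ε / 1) := by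
          rw [abs_mul, abs_of_pos c0]; gcongr
      _ = _ := by ring
  have c1 : 0 < 1 / k / (1 - k) + c := by positivity
  refine le_of_forall_pos_le_add fun ε hε => ?_
  have := key (ε / (1 / k / (1 - k) + c)) (by positivity)
  rwa [mul_div_cancel₀ _ c1.ne', ← zero_add ε] at this

lemma zt_int {z : ℝ → ℝ} (hz : ContinuousOn z (Icc 0 1)) {C e : ℝ} (he : 0 < e)
    (hb : ∀ t ∈ Icc (0:ℝ) 1, |z t| ≤ C * t ^ e) {x : ℝ} (hx : x ∈ Ioc (0:ℝ) 1) :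
    IntervalIntegrable (fun t => z t / t) volume 0 x := by
  have h1 : IntervalIntegrable (fun t : ℝ => C * t ^ (e - 1)) volume 0 x :=
    (intervalIntegrable_rpow' (by linarith)).const_mul C
  have hsub : Ioc 0 x ⊆ Icc (0:ℝ) 1 := fun t ht => ⟨ht.1.le, ht.2.trans hx.2⟩
  apply h1.mono_fun'
  · rw [uIoc_of_le hx.1.le]
    apply ContinuousOn.aestronglyMeasurable _ measurableSet_Ioc
    exact (hz.mono hsub).div continuousOn_id (fun t ht => ht.1.ne')
  · rw [uIoc_of_le hx.1.le]
    filter_upwards [ae_restrict_mem measurableSet_Ioc] with t ht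
    rw [Real.norm_eq_abs, abs_div, abs_of_pos ht.1, Real.rpow_sub_one ht.1.ne', ← mul_div_assoc]
    exact div_le_div_of_nonneg_right (hb t (hsub ht)) ht.1.le

lemma xt_int {k : ℝ} (hk1 : k < 1) {x : ℝ} {h : ℝ → ℝ} (hh : ContinuousOn h (Icc 0 1))
    (hx : x ∈ Ioc (0:ℝ) 1) : IntervalIntegrable (fun t => (x - t) ^ (-k) * h t) volume 0 x := by
  have h1 := (intervalIntegrable_rpow' (a := x) (b := 0) (r := -k) (by linarith)).comp_sub_left x
  simp only [sub_self, sub_zero] at h1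
  apply h1.mul_continuousOn
  rw [uIcc_of_le hx.1.le]
  exact hh.mono (Icc_subset_Icc_right hx.2)

lemma caputo_parts {k : ℝ} (hk : 0 < k) (hk1 : k < 1) {w z : ℝ → ℝ} (h : Th w z) {C e : ℝ}
    (he : 0 < e) (hb : ∀ t ∈ Icc (0:ℝ) 1, |z t| ≤ C * t ^ e) {x : ℝ} (hx : x ∈ Ioo (0:ℝ) 1) :
    x * ∫ t in (0:ℝ)..x, (x - t) ^ (-k) * (z t / t)
      = Jp (1 - k) (fun t => (1 - k) * (w t + -w 0) + z t) x := by
  obtain ⟨hw, hz, hd⟩ := h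
  have hx' : x ∈ Ioc (0:ℝ) 1 := ⟨hx.1, hx.2.le⟩
  have hv : ContinuousOn (fun t => w t + -w 0) (Icc 0 1) := hw.add continuousOn_const
  have zi := zt_int hz he hb hx'
  have cu : Continuous (fun t : ℝ => (x - t) ^ (1 - k)) :=
    (Real.continuous_rpow_const (by linarith)).comp (continuous_const.sub continuous_id)
  rw [J_eq hx.1, show 1 - k - 1 = -k by ring]
  have parts := integral_mul_deriv_eq_deriv_mul_of_hasDerivAt (a := 0) (b := x)
    (u := fun t => (x - t) ^ (1 - k)) (v := fun t => w t + -w 0)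
    (u' := fun t => (x - t) ^ (-k) * (-(1 - k))) (v' := fun t => z t / t) cu.continuousOn
    (by rw [uIcc_of_le hx.1.le]; exact hv.mono (Icc_subset_Icc_right hx.2.le))
    (by
      rw [min_eq_left hx.1.le, max_eq_right hx.1.le]
      intro t ht
      have h1 := ((hasDerivAt_id t).const_sub x).rpow_const (p := 1 - k)
        (Or.inl (by simp only [id]; linarith [ht.2]))
      refine h1.congr_deriv ?_
      simp only [id]
      rw [show 1 - k - 1 = -k by ring]; ring)
    (by
      rw [min_eq_left hx.1.le, max_eq_right hx.1.le]
      intro t ht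
      exact (hd t ⟨ht.1, ht.2.trans hx.2⟩).add_const _)
    (xt_int hk1 continuousOn_const hx') zi
  have i1 := xt_int hk1 hz hx'
  have i2 : IntervalIntegrable (fun t => (x - t) ^ (1 - k) * (z t / t)) volume 0 x :=
    zi.continuousOn_mul cu.continuousOn
  have i3 := xt_int hk1 hv hx'
  calc x * ∫ t in (0:ℝ)..x, (x - t) ^ (-k) * (z t / t)
      = ∫ t in (0:ℝ)..x, ((x - t) ^ (-k) * z t + (x - t) ^ (1 - k) * (z t / t)) := by
        rw [← intervalIntegral.integral_const_mul]
        apply integral_congr_uIoo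
        rw [uIoo_of_le hx.1.le]
        intro t ht
        have h1 : 0 < x - t := by linarith [ht.2]
        have h2 := ht.1.ne'
        simp only
        rw [show 1 - k = -k + 1 by ring, Real.rpow_add_one h1.ne']
        field_simp
        ring
    _ = (∫ t in (0:ℝ)..x, (x - t) ^ (-k) * z t)
        + (1 - k) * ∫ t in (0:ℝ)..x, (x - t) ^ (-k) * (w t + -w 0) := by
        rw [integral_add i1 i2, parts, ← intervalIntegral.integral_const_mul, sub_self,
          Real.zero_rpow (by linarith), add_neg_cancel]
        rw [zero_mul, mul_zero, sub_zero, zero_sub, ← intervalIntegral.integral_neg]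
        congr 1
        apply integral_congr
        intro t _
        simp only
        ring
    _ = _ := by
        rw [← intervalIntegral.integral_const_mul, ← integral_add i1 (i3.const_mul _)]
        apply integral_congr
        intro t _
        simp only
        ring

lemma caputo_RL {k : ℝ} (hk : 0 < k) (hk1 : k < 1) {w z : ℝ → ℝ} (h : Th w z) {C e : ℝ}
    (he : 0 < e) (hb : ∀ t ∈ Icc (0:ℝ) 1, |z t| ≤ C * t ^ e) {x : ℝ} (hx : x ∈ Ioo (0:ℝ) 1) :
    HasDerivAt (Jp (1 - k) (fun t => w t + -w 0))
      (∫ t in (0:ℝ)..x, (x - t) ^ (-k) * (z t / t)) x := by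
  have h1 : Th (fun t => w t + -w 0) (fun t => z t + 0) := h.add (Th.const (-w 0))
  have h2 := (J_Th (p := 1 - k) (by linarith) h1).2.2 x hx
  refine h2.congr_deriv ?_
  simp only [add_zero]
  rw [← caputo_parts hk hk1 h he hb hx]
  have := hx.1.ne'
  field_simp

lemma caputo_of_volterra {k : ℝ} (hk : 0 < k) (hk1 : k < 1) {w z v : ℝ → ℝ} (h : Th w z) {C e : ℝ}
    (he : 0 < e) (hb : ∀ t ∈ Icc (0:ℝ) 1, |z t| ≤ C * t ^ e)
    (hv : ContinuousOn v (Icc 0 1)) (ew : ∀ t ∈ Icc (0:ℝ) 1, w t = w 0 + Jp k v t)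
    {x : ℝ} (hx : x ∈ Ioo (0:ℝ) 1) :
    ∫ t in (0:ℝ)..x, (x - t) ^ (-k) * (z t / t) = Real.Gamma k * Real.Gamma (1 - k) * v x := by
  have h1 := caputo_RL hk hk1 h he hb hx
  have h2 := (J1_deriv hv hx).const_mul (Real.Gamma k * Real.Gamma (1 - k))
  refine HasDerivAt.unique h1 (h2.congr_of_eventuallyEq ?_)
  filter_upwards [Ioo_mem_nhds hx.1 hx.2] with t ht
  have ht' : t ∈ Icc (0:ℝ) 1 := ⟨ht.1.le, ht.2.le⟩
  rw [← abel hk hk1 hv ht']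
  apply J_congr _ ht'
  intro s hs
  rw [ew s hs]; ring

lemma volterra_of_caputo {k : ℝ} (hk : 0 < k) (hk1 : k < 1) {w z v : ℝ → ℝ} (h : Th w z) {C e : ℝ}
    (he : 0 < e) (hb : ∀ t ∈ Icc (0:ℝ) 1, |z t| ≤ C * t ^ e)
    (hv : ContinuousOn v (Icc 0 1))
    (hC : ∀ x ∈ Ioo (0:ℝ) 1,
      ∫ t in (0:ℝ)..x, (x - t) ^ (-k) * (z t / t) = Real.Gamma k * Real.Gamma (1 - k) * v x) :
    ∀ t ∈ Icc (0:ℝ) 1, w t = w 0 + Jp k v t := by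
  have hk' : 0 < 1 - k := by linarith
  set c := Real.Gamma k * Real.Gamma (1 - k) with hc
  have c0 : 0 < c := mul_pos (Real.Gamma_pos_of_pos hk) (Real.Gamma_pos_of_pos hk')
  have hw0 : ContinuousOn (fun t => w t + -w 0) (Icc 0 1) := h.1.add continuousOn_const
  have s1 : ∀ x ∈ Icc (0:ℝ) 1, Jp (1 - k) (fun t => w t + -w 0) x = c * Jp 1 v x := by
    intro x hx
    rcases hx.1.eq_or_lt with h0 | h0
    · rw [← h0, J_zero hk', J_zero one_pos, mul_zero]
    have hcont : ContinuousOn (fun x => Jp (1 - k) (fun t => w t + -w 0) x - c * Jp 1 v x)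
        (Icc 0 x) := ((J_cont hk' hw0).sub ((J_cont one_pos hv).const_mul c)).mono
          (Icc_subset_Icc_right hx.2)
    obtain ⟨y, _, hy⟩ := exists_hasDerivAt_eq_slope _ (fun _ => 0) h0 hcont (by
      intro y hy
      have hy' : y ∈ Ioo (0:ℝ) 1 := ⟨hy.1, lt_of_lt_of_le hy.2 hx.2⟩
      refine ((caputo_RL hk hk1 h he hb hy').sub ((J1_deriv hv hy').const_mul c)).congr_deriv ?_
      rw [hC y hy']; ring)
    rw [J_zero hk', J_zero one_pos, eq_comm, div_eq_zero_iff] at hy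
    rcases hy with hy | hy
    · linarith
    · linarith
  set E : ℝ → ℝ := fun t => (w t + -w 0) + (-1) * Jp k v t with hE
  have cE : ContinuousOn E (Icc 0 1) := hw0.add ((J_cont hk hv).const_mul _)
  have s2 : ∀ x ∈ Icc (0:ℝ) 1, Jp (1 - k) E x = 0 := by
    intro x hx
    rw [hE, J_lin hk' (-1) hw0 (J_cont hk hv) hx, s1 x hx, abel hk hk1 hv hx]
    ring
  have s3 : ∀ x ∈ Icc (0:ℝ) 1, Jp 1 E x = 0 := by
    intro x hx
    have h1 := abel hk' (by linarith) cE hx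
    rw [sub_sub_cancel, J_congr (h := fun _ => 0 * 0) (fun t ht => by rw [s2 t ht, zero_mul]) hx,
      J_smul, zero_mul, mul_comm (Real.Gamma (1 - k)), ← hc] at h1
    rcases mul_eq_zero.1 h1.symm with h2 | h2
    · exact absurd h2 c0.ne'
    · exact h2
  have s4 : EqOn E (fun _ => 0) (Ioo 0 1) := by
    intro x hx
    refine HasDerivAt.unique (J1_deriv cE hx) ((hasDerivAt_const x 0).congr_of_eventuallyEq ?_)
    filter_upwards [Ioo_mem_nhds hx.1 hx.2] with t ht
    exact s3 t ⟨ht.1.le, ht.2.le⟩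
  have s5 := s4.of_subset_closure cE continuousOn_const Ioo_subset_Icc_self
    (by rw [closure_Ioo zero_ne_one])
  intro t ht
  have := s5 ht
  simp only [hE] at this
  linarith

lemma hdw {y y' : ℝ → ℝ} (hy : ContinuousOn y (Ioc 0 1)) (hy' : ContinuousOn y' (Ioc 0 1))
    (hd : ∀ x ∈ Ioo (0:ℝ) 1, HasDerivAt y (y' x) x) {x : ℝ} (hx : x ∈ Ioc (0:ℝ) 1) :
    HasDerivWithinAt y (y' x) (Icc 0 1) x := by
  rcases hx.2.eq_or_lt with h1 | h1
  · subst h1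
    have hm : Ioo (0:ℝ) 1 ∈ 𝓝[<] (1:ℝ) := Ioo_mem_nhdsLT one_pos
    have h := hasDerivWithinAt_Iic_of_tendsto_deriv (s := Ioo 0 1) (f := y) (e := y' 1) (a := 1)
      (fun t ht => (hd t ht).differentiableAt.differentiableWithinAt)
      ((hy 1 hx).mono Ioo_subset_Ioc_self) hm (by
        have h2 : Tendsto y' (𝓝[Ioo 0 1] 1) (𝓝 (y' 1)) := (hy' 1 hx).mono Ioo_subset_Ioc_self
        rw [nhdsWithin_Ioo_eq_nhdsLT one_pos] at h2
        refine h2.congr' ?_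
        filter_upwards [hm] with t ht
        exact (hd t ht).deriv.symm)
    exact h.mono (fun t ht => ht.2)
  · exact (hd x ⟨hx.1, h1⟩).hasDerivWithinAt

lemma udI : UniqueDiffOn ℝ (Icc (0:ℝ) 1) := uniqueDiffOn_Icc one_pos

lemma udO : UniqueDiffOn ℝ (Ioc (0:ℝ) 1) := uniqueDiffOn_Ioc 0 1

lemma IccIoc {x : ℝ} (hx : x ∈ Ioc (0:ℝ) 1) : (Icc (0:ℝ) 1 : Set ℝ) =ᶠ[𝓝 x] Ioc (0:ℝ) 1 := by
  filter_upwards [Ioi_mem_nhds hx.1] with t ht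
  apply propext
  exact ⟨fun h => ⟨ht, h.2⟩, fun h => ⟨h.1.le, h.2⟩⟩

lemma itd_set (g : ℝ → ℝ) (i : ℕ) {x : ℝ} (hx : x ∈ Ioc (0:ℝ) 1) :
    iteratedDerivWithin i g (Icc 0 1) x = iteratedDerivWithin i g (Ioc 0 1) x := by
  unfold iteratedDerivWithin
  rw [iteratedFDerivWithin_congr_set (IccIoc hx) i]

lemma chain {n : ℕ} {d : ℕ → ℝ → ℝ}
    (hc : ∀ i ≤ n, ContinuousOn (d i) (Ioc 0 1))
    (hd : ∀ i < n, ∀ x ∈ Ioo (0:ℝ) 1, HasDerivAt (d i) (d (i+1) x) x) :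
    (∀ i ≤ n, ∀ x ∈ Ioc (0:ℝ) 1, iteratedDerivWithin i (d 0) (Icc 0 1) x = d i x) ∧
    ContDiffOn ℝ n (d 0) (Ioc 0 1) := by
  have hI : ∀ i < n, ∀ x ∈ Ioc (0:ℝ) 1, HasDerivWithinAt (d i) (d (i+1) x) (Icc 0 1) x :=
    fun i hi x hx => hdw (hc i hi.le) (hc (i+1) hi) (hd i hi) hx
  have key : ∀ i ≤ n, EqOn (iteratedDerivWithin i (d 0) (Ioc 0 1)) (d i) (Ioc 0 1) := by
    intro i
    induction i with
    | zero => intro _ x _; simp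
    | succ i ih =>
      intro hi x hx
      have ih' := ih (by omega)
      rw [iteratedDerivWithin_succ, derivWithin_congr ih' (ih' hx)]
      exact ((hI i hi x hx).mono Ioc_subset_Icc_self).derivWithin (udO x hx)
  refine ⟨fun i hi x hx => by rw [itd_set _ _ hx]; exact key i hi hx, ?_⟩
  have := contDiffOn_of_continuousOn_differentiableOn_deriv (𝕜 := ℝ) (n := (n : ℕ∞)) (f := d 0)
    (s := Ioc (0:ℝ) 1) (by
      intro m hm
      have hm' : m ≤ n := by exact_mod_cast hm
      exact (hc m hm').congr (key m hm')) (by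
      intro m hm
      have hm' : m < n := by exact_mod_cast hm
      have h1 : DifferentiableOn ℝ (d m) (Ioc 0 1) := fun x hx =>
        ((hI m hm' x hx).mono Ioc_subset_Icc_self).differentiableWithinAt
      exact h1.congr (key m hm'.le))
  exact this

lemma chain_of {n : ℕ} {g : ℝ → ℝ} (hg : ContDiffOn ℝ n g (Ioc 0 1)) :
    (∀ i ≤ n, ContinuousOn (iteratedDerivWithin i g (Icc 0 1)) (Ioc 0 1)) ∧
    (∀ i < n, ∀ x ∈ Ioo (0:ℝ) 1, HasDerivAt (iteratedDerivWithin i g (Icc 0 1))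
      (iteratedDerivWithin (i+1) g (Icc 0 1) x) x) := by
  refine ⟨fun i hi => ?_, fun i hi x hx => ?_⟩
  · exact (hg.continuousOn_iteratedDerivWithin (by exact_mod_cast hi) udO).congr
      (fun x hx => itd_set g i hx)
  · have hx' : x ∈ Ioc (0:ℝ) 1 := ⟨hx.1, hx.2.le⟩
    have h1 := hg.differentiableOn_iteratedDerivWithin (m := i) (by exact_mod_cast hi) udO x hx'
    have hm : Ioc (0:ℝ) 1 ∈ 𝓝 x := Ioc_mem_nhds hx.1 hx.2
    have h2 := h1.hasDerivWithinAt.hasDerivAt hm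
    rw [itd_set g (i+1) hx', iteratedDerivWithin_succ]
    apply h2.congr_of_eventuallyEq
    filter_upwards [hm] with t ht
    exact itd_set g i ht

lemma cont_pow_mul {e C : ℝ} (he : 0 < e) {y : ℝ → ℝ} (hy : ContinuousOn y (Ioc 0 1))
    (hy0 : y 0 = 0)
    (hb : ∀ x ∈ Ioc (0:ℝ) 1, |y x| ≤ C * x ^ e) : ContinuousOn y (Icc 0 1) := by
  intro x hx
  rcases hx.1.eq_or_lt with h0 | h0
  · subst h0
    unfold ContinuousWithinAt
    rw [hy0]
    have h1 : Tendsto (fun x : ℝ => C * x ^ e) (𝓝[Icc 0 1] 0) (𝓝 0) := by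
      have : Continuous (fun x : ℝ => C * x ^ e) :=
        continuous_const.mul (Real.continuous_rpow_const he.le)
      have h2 := this.tendsto 0
      simp only [Real.zero_rpow he.ne', mul_zero] at h2
      exact h2.mono_left nhdsWithin_le_nhds
    apply squeeze_zero_norm' _ h1
    filter_upwards [self_mem_nhdsWithin] with t ht
    rcases ht.1.eq_or_lt with h | h
    · rw [← h, hy0, Real.zero_rpow he.ne']; simp
    · exact hb t ⟨h, ht.2⟩
  · exact (hy x ⟨h0, hx.2⟩).mono_of_mem_nhdsWithin (by
      rw [mem_nhdsWithin_iff_eventually]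
      filter_upwards [Ioi_mem_nhds h0] with t ht h
      exact ⟨ht, h.2⟩)

lemma reg_chain {k C : ℝ} (hk : 0 < k) {n : ℕ} {d : ℕ → ℝ → ℝ}
    (hc : ∀ i ≤ n, ContinuousOn (d i) (Ioc 0 1))
    (hd : ∀ i < n, ∀ x ∈ Ioo (0:ℝ) 1, HasDerivAt (d i) (d (i+1) x) x)
    (hb : ∀ i, 1 ≤ i → i ≤ n → ∀ x ∈ Ioc (0:ℝ) 1, |d i x| ≤ C * x ^ (k - i)) (m : ℕ) :
    ∀ i, 1 ≤ i → i + m ≤ n → Reg m (fun x => x ^ i * d i x) := by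
  have hcont : ∀ i, 1 ≤ i → i ≤ n → ContinuousOn (fun x => x ^ i * d i x) (Icc 0 1) := by
    intro i hi hin
    apply cont_pow_mul (C := C) hk
    · have := hc i hin
      fun_prop
    · simp [show i ≠ 0 by omega]
    · intro x hx
      have h1 := hb i hi hin x hx
      rw [abs_mul, abs_of_nonneg (pow_nonneg hx.1.le i)]
      calc x ^ i * |d i x| ≤ x ^ i * (C * x ^ (k - i)) :=
            mul_le_mul_of_nonneg_left h1 (pow_nonneg hx.1.le i)
        _ = C * x ^ k := by
            rw [Real.rpow_sub hx.1, Real.rpow_natCast]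
            have := pow_ne_zero i hx.1.ne'
            field_simp
  induction m with
  | zero => intro i hi hin; exact hcont i hi hin
  | succ m ih =>
    intro i hi hin
    refine ⟨fun x => i * (x ^ i * d i x) + x ^ (i+1) * d (i+1) x,
      ⟨hcont i hi (by omega),
        ((hcont i hi (by omega)).const_mul _).add (hcont (i+1) (by omega) (by omega)), ?_⟩,
      (Reg.smul _ (ih i hi (by omega))).add (ih (i+1) (by omega) (by omega))⟩
    intro x hx
    refine ((hasDerivAt_pow i x).mul (hd i (by omega) x hx)).congr_deriv ?_
    have := hx.1.ne'
    obtain ⟨j, rfl⟩ : ∃ j, i = j + 1 := ⟨i - 1, by omega⟩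
    simp only [Nat.add_sub_cancel]
    field_simp
    ring

lemma CqNu_bound {q : ℕ} {μ k : ℝ} (hk : 0 < k) (hk1 : k < 1) (hμ : k ≤ 1 - μ) {b : ℝ → ℝ}
    (hb : CqNu q μ b) : ∃ C : ℝ, ∀ i, 1 ≤ i → i ≤ q → ∀ x ∈ Ioc (0:ℝ) 1,
      |iteratedDerivWithin i b (Icc 0 1) x| ≤ C * x ^ (k - i) := by
  obtain ⟨_, _, C, hC⟩ := hb
  have hk' : 0 < 1 - k := by linarith
  refine ⟨|C| * (1 + 1 / (1 - k)), fun i hi hiq x hx => ?_⟩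
  obtain ⟨h1, h2, h3⟩ := hC i hi hiq x hx
  have hi' : (1:ℝ) ≤ i := by exact_mod_cast hi
  have hp : 0 < 1 / (1 - k) := by positivity
  have hx1 : 1 ≤ x ^ (k - i) := Real.one_le_rpow_of_pos_of_le_one_of_nonpos hx.1 hx.2 (by linarith)
  have hC0 := abs_nonneg C
  have hC1 := le_abs_self C
  have tail : ∀ A, A ≤ x ^ (k - i) * (1 + 1 / (1 - k)) → 0 ≤ A →
      C * A ≤ |C| * (1 + 1 / (1 - k)) * x ^ (k - i) := by
    intro A hA hA0
    calc C * A ≤ |C| * A := mul_le_mul_of_nonneg_right hC1 hA0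
      _ ≤ |C| * (x ^ (k - i) * (1 + 1 / (1 - k))) := mul_le_mul_of_nonneg_left hA hC0
      _ = _ := by ring
  rcases lt_trichotomy (i:ℝ) (1 - μ) with h | h | h
  · refine (h1 h).trans ?_
    rw [← mul_one C]
    exact (tail 1 (by nlinarith) zero_le_one).trans (by rw [mul_one])
  · refine (h2 h).trans (tail _ ?_ (by positivity))
    have hl := Real.abs_log_mul_self_rpow_lt x (i - k) hx.1 hx.2 (by linarith)
    rw [abs_mul, abs_of_nonneg (Real.rpow_nonneg hx.1.le _)] at hl
    have e : x ^ ((i:ℝ) - k) * x ^ (k - i) = 1 := by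
      rw [← Real.rpow_add hx.1]; simp
    have hl2 : |Real.log x| ≤ 1 / (1 - k) * x ^ (k - i) := by
      calc |Real.log x| = |Real.log x| * x ^ ((i:ℝ) - k) * x ^ (k - i) := by
            rw [mul_assoc, e, mul_one]
        _ ≤ 1 / (i - k) * x ^ (k - i) := mul_le_mul_of_nonneg_right hl.le (by linarith)
        _ ≤ 1 / (1 - k) * x ^ (k - i) := by
            apply mul_le_mul_of_nonneg_right _ (by linarith)
            exact one_div_le_one_div_of_le hk' (by linarith)
    nlinarith
  · refine (h3 h).trans (tail _ ?_ (Real.rpow_nonneg hx.1.le _))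
    have := Real.rpow_le_rpow_of_exponent_ge hx.1 hx.2 (show k - i ≤ 1 - μ - i by linarith)
    nlinarith

lemma CqNu_reg {q : ℕ} {μ k : ℝ} (hk : 0 < k) (hk1 : k < 1) (hμ : k ≤ 1 - μ) {b : ℝ → ℝ}
    (hq : 1 ≤ q) (hb : CqNu q μ b) : Reg q b := by
  obtain ⟨C, hC⟩ := CqNu_bound hk hk1 hμ hb
  obtain ⟨h1, h2⟩ := chain_of hb.2.1
  obtain ⟨m, rfl⟩ : ∃ m, q = m + 1 := ⟨q - 1, by omega⟩
  have h3 := reg_chain hk h1 h2 hC m 1 le_rfl (by omega)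
  refine ⟨_, ⟨hb.1, h3.cont, fun x hx => ?_⟩, h3⟩
  have h4 := h2 0 (by omega) x hx
  simp only [iteratedDerivWithin_zero] at h4
  refine h4.congr_deriv ?_
  have := hx.1.ne'
  simp only [zero_add, pow_one]
  field_simp

/-- derivatives of `β + J_k v` -/
lemma J_chain {k : ℝ} (hk : 0 < k) (q : ℕ) {v : ℝ → ℝ} (hv : Reg q v) :
    ∃ V : ℕ → ℝ → ℝ, V 0 = v ∧ (∀ i ≤ q, ContinuousOn (V i) (Icc 0 1)) ∧
      (∀ i < q, ∀ x ∈ Ioo (0:ℝ) 1, HasDerivAt (fun x => (x ^ i)⁻¹ * Jp k (V i) x)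
        ((x ^ (i+1))⁻¹ * Jp k (V (i+1)) x) x) := by
  have step : ∀ i n, ∀ y, Reg (n+1) y → ∃ z, Reg n z ∧
      ∀ x ∈ Ioo (0:ℝ) 1, HasDerivAt (fun x => (x ^ i)⁻¹ * Jp k y x)
        ((x ^ (i+1))⁻¹ * Jp k z x) x := by
    intro i n y hy
    have hy1 := hy.pred
    obtain ⟨z, hT, hz⟩ := hy
    refine ⟨fun t => (k * y t + z t) + (-i) * y t, ((hy1.smul k).add hz).add (hy1.smul _), ?_⟩
    intro x hx
    have hx0 := hx.1.ne'
    rw [J_lin (g := fun t => k * y t + z t) hk (-i) ((hT.1.const_mul k).add hT.2.1) hT.1 ⟨hx.1.le, hx.2.le⟩]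
    have h1 := (J_Th hk hT).2.2 x hx
    have h2 := ((hasDerivAt_pow i x).inv (pow_ne_zero i hx0)).mul h1
    refine h2.congr_deriv ?_
    rcases i with _ | j
    · simp; field_simp
    · simp only [Nat.add_sub_cancel, Pi.inv_apply]
      push_cast
      field_simp
      ring
  choose! S hS1 hS2 using step
  let V : ℕ → ℝ → ℝ := fun i => Nat.rec v (fun i y => S i (q - (i + 1)) y) i
  have hR : ∀ i ≤ q, Reg (q - i) (V i) := by
    intro i
    induction i with
    | zero => intro _; exact hv
    | succ i ih =>
      intro hi
      have h := ih (by omega)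
      rw [show q - i = (q - (i+1)) + 1 by omega] at h
      exact hS1 i _ _ h
  refine ⟨V, rfl, fun i hi => (hR i hi).cont, fun i hi x hx => ?_⟩
  have h := hR i hi.le
  rw [show q - i = (q - (i+1)) + 1 by omega] at h
  exact hS2 i _ _ h x hx

/-- The function `a + ∫ w`, with `w = β + J_k v`. -/
lemma u_reg {k a β : ℝ} (hk : 0 < k) {q : ℕ} (hq : 1 ≤ q) {v w u : ℝ → ℝ} (hv : Reg q v)
    (hw : ContinuousOn w (Icc 0 1))
    (ew : ∀ x ∈ Icc (0:ℝ) 1, w x = β + Jp k v x)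
    (eu : ∀ x ∈ Icc (0:ℝ) 1, u x = a + Jp 1 w x) :
    ContDiffOn ℝ (q + 1 : ℕ) u (Ioc 0 1) ∧
    ∃ C : ℝ, ∀ x ∈ Ioc (0:ℝ) 1,
      (∀ i : ℕ, i ≤ 1 → |iteratedDerivWithin i u (Icc 0 1) x| ≤ C) ∧
      (∀ i : ℕ, 2 ≤ i → i ≤ q + 1 →
          |iteratedDerivWithin i u (Icc 0 1) x| ≤ C * x ^ (k + 1 - i)) := by
  obtain ⟨V, hV0, hVc, hVd⟩ := J_chain hk q hv
  let d : ℕ → ℝ → ℝ := fun i => match i with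
    | 0 => u
    | 1 => w
    | (i+2) => fun x => (x ^ (i+1))⁻¹ * Jp k (V (i+1)) x
  have hu : ContinuousOn u (Icc 0 1) := (continuousOn_const.add (J_cont one_pos hw)).congr eu
  have dc : ∀ i ≤ q + 1, ContinuousOn (d i) (Ioc 0 1) := by
    intro i hi
    match i with
    | 0 => exact hu.mono Ioc_subset_Icc_self
    | 1 => exact hw.mono Ioc_subset_Icc_self
    | (i+2) =>
      apply ContinuousOn.mul
      · apply ContinuousOn.inv₀ (by fun_prop)
        intro x hx
        exact pow_ne_zero _ hx.1.ne'
      · exact (J_cont hk (hVc (i+1) (by omega))).mono Ioc_subset_Icc_self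
  have dd : ∀ i < q + 1, ∀ x ∈ Ioo (0:ℝ) 1, HasDerivAt (d i) (d (i+1) x) x := by
    intro i hi x hx
    have hm := Ioo_mem_nhds hx.1 hx.2
    match i with
    | 0 =>
      refine ((J1_deriv hw hx).const_add a).congr_of_eventuallyEq ?_
      filter_upwards [hm] with t ht
      exact eu t ⟨ht.1.le, ht.2.le⟩
    | 1 =>
      have h := (hVd 0 (by omega) x hx).const_add β
      refine h.congr_of_eventuallyEq ?_
      filter_upwards [hm] with t ht
      simp only [d, pow_zero, inv_one, one_mul, hV0]
      exact ew t ⟨ht.1.le, ht.2.le⟩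
    | (i+2) => exact hVd (i+1) (by omega) x hx
  obtain ⟨h1, h2⟩ := chain dc dd
  refine ⟨h2, ?_⟩
  obtain ⟨Mu, hMu0, hMu⟩ := bdd_of_cont hu
  obtain ⟨Mw, hMw0, hMw⟩ := bdd_of_cont hw
  have hM : ∀ i, ∃ M : ℝ, 0 ≤ M ∧ (i ≤ q → ∀ t ∈ Icc (0:ℝ) 1, |V i t| ≤ M) := by
    intro i
    by_cases hi : i ≤ q
    · obtain ⟨M, h, h'⟩ := bdd_of_cont (hVc i hi); exact ⟨M, h, fun _ => h'⟩
    · exact ⟨0, le_rfl, fun h => absurd h hi⟩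
  choose M hM0 hM using hM
  set S := ∑ i ∈ Finset.range (q+1), M i / k with hS
  have hS0 : 0 ≤ S := Finset.sum_nonneg (fun i _ => div_nonneg (hM0 i) hk.le)
  refine ⟨Mu + Mw + S, fun x hx => ⟨fun i hi => ?_, fun i hi hiq => ?_⟩⟩
  · have hxI := Ioc_subset_Icc_self hx
    have e := h1 i (by omega) x hx
    change iteratedDerivWithin i u (Icc 0 1) x = d i x at e
    rw [e]
    have := hMu x hxI
    have := hMw x hxI
    interval_cases i
    · change |u x| ≤ _; linarith
    · change |w x| ≤ _; linarith
  · have hxI := Ioc_subset_Icc_self hx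
    have e := h1 i hiq x hx
    change iteratedDerivWithin i u (Icc 0 1) x = d i x at e
    rw [e]
    obtain ⟨j, rfl⟩ : ∃ j, i = j + 2 := ⟨i - 2, by omega⟩
    change |(x ^ (j+1))⁻¹ * Jp k (V (j+1)) x| ≤ _
    have hb := J_bound hk hxI (g := V (j+1)) (M := M (j+1))
      (fun t ht => hM (j+1) (by omega) t ⟨ht.1, ht.2.trans hx.2⟩)
    have hxp : 0 < (x ^ (j+1))⁻¹ := inv_pos.2 (pow_pos hx.1 _)
    have hle : M (j+1) / k ≤ S :=
      Finset.single_le_sum (f := fun i => M i / k) (fun i _ => div_nonneg (hM0 i) hk.le)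
        (Finset.mem_range.2 (by omega))
    rw [abs_mul, abs_of_pos hxp]
    calc (x ^ (j+1))⁻¹ * |Jp k (V (j+1)) x| ≤ (x ^ (j+1))⁻¹ * (M (j+1) / k * x ^ k) :=
          mul_le_mul_of_nonneg_left hb hxp.le
      _ = M (j+1) / k * x ^ (k + 1 - ((j + 2 : ℕ) : ℝ)) := by
          rw [show k + 1 - ((j + 2 : ℕ) : ℝ) = k - ((j + 1 : ℕ) : ℝ) by push_cast; ring,
            Real.rpow_sub hx.1, Real.rpow_natCast]
          ring
      _ ≤ _ := mul_le_mul_of_nonneg_right (by linarith) (Real.rpow_nonneg hx.1.le _)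

noncomputable def Sv (b c f : ℝ → ℝ) (a : ℝ) (w : ℝ → ℝ) (t : ℝ) : ℝ :=
  b t * w t + c t * (a + Jp 1 w t) + -f t

def Sol (k : ℝ) (b c f : ℝ → ℝ) (a β : ℝ) (w : ℝ → ℝ) : Prop :=
  ContinuousOn w (Icc 0 1) ∧ ∀ x ∈ Icc (0:ℝ) 1, w x = β + Jp k (Sv b c f a w) x

lemma Sv_cont {b c f w : ℝ → ℝ} (a : ℝ) (hb : ContinuousOn b (Icc 0 1))
    (hc : ContinuousOn c (Icc 0 1)) (hf : ContinuousOn f (Icc 0 1)) (hw : ContinuousOn w (Icc 0 1)) :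
    ContinuousOn (Sv b c f a w) (Icc 0 1) :=
  ((hb.mul hw).add (hc.mul (continuousOn_const.add (J_cont one_pos hw)))).add hf.neg

lemma Sv_reg {n : ℕ} {b c f w : ℝ → ℝ} (a : ℝ) (hb : Reg n b)
    (hc : Reg n c) (hf : Reg n f) (hw : Reg n w) : Reg n (Sv b c f a w) :=
  (((hb.mul hw).add (hc.mul ((Reg.const n a).add (Reg.J one_pos hw)))).add (hf.smul (-1))).congr
    (fun t _ => by unfold Sv; ring)

lemma Sol.init {k : ℝ} (hk : 0 < k) {b c f w : ℝ → ℝ} {a β : ℝ} (h : Sol k b c f a β w) :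
    w 0 = β := by
  rw [h.2 0 ⟨le_rfl, zero_le_one⟩, J_zero hk, add_zero]

lemma Sol.lin {k : ℝ} (hk : 0 < k) {b c f f' w w' : ℝ → ℝ} {a a' β β' : ℝ}
    (hb : ContinuousOn b (Icc 0 1)) (hc : ContinuousOn c (Icc 0 1))
    (hf : ContinuousOn f (Icc 0 1)) (hf' : ContinuousOn f' (Icc 0 1)) (r : ℝ)
    (h : Sol k b c f a β w) (h' : Sol k b c f' a' β' w') :
    Sol k b c (fun t => f t + r * f' t) (a + r * a') (β + r * β') (fun t => w t + r * w' t) := by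
  refine ⟨h.1.add (h'.1.const_mul r), fun x hx => ?_⟩
  have e : Jp k (Sv b c (fun t => f t + r * f' t) (a + r * a') (fun t => w t + r * w' t)) x
      = Jp k (Sv b c f a w) x + r * Jp k (Sv b c f' a' w') x := by
    rw [← J_lin hk r (Sv_cont a hb hc hf h.1) (Sv_cont a' hb hc hf' h'.1) hx]
    apply J_congr _ hx
    intro t ht
    unfold Sv
    rw [J_lin one_pos r h.1 h'.1 ht]
    ring
  change w x + r * w' x = _
  rw [e, h.2 x hx, h'.2 x hx]
  ring

lemma Sol.split {k : ℝ} (hk : 0 < k) {b c f w : ℝ → ℝ} {a β : ℝ}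
    (hb : ContinuousOn b (Icc 0 1)) (hc : ContinuousOn c (Icc 0 1))
    (hf : ContinuousOn f (Icc 0 1)) (hw : ContinuousOn w (Icc 0 1)) {x : ℝ}
    (hx : x ∈ Icc (0:ℝ) 1) :
    β + Jp k (Sv b c f a w) x = (β + Jp k (fun t => a * c t + -f t) x) + TT k b c w x := by
  unfold TT
  rw [add_assoc, ← J_add (g := fun t => a * c t + -f t) hk ((hc.const_mul a).add hf.neg) (TT_in hk hb hc hw) hx]
  congr 1
  apply J_congr _ hx
  intro t _
  unfold Sv
  ring

lemma Sol.exists {k : ℝ} (hk : 0 < k) (hk2 : k ≤ 2) {b c f : ℝ → ℝ} (a β : ℝ)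
    (hb : ContinuousOn b (Icc 0 1)) (hc : ContinuousOn c (Icc 0 1))
    (hf : ContinuousOn f (Icc 0 1)) : ∃ w, Continuous w ∧ Sol k b c f a β w := by
  obtain ⟨w, hw, e⟩ := volterra_exists hk hb hc hk2
    (F := fun x => β + Jp k (fun t => a * c t + -f t) x)
    (continuousOn_const.add (J_cont hk ((hc.const_mul a).add hf.neg)))
  refine ⟨w, hw, hw.continuousOn, fun x hx => ?_⟩
  rw [Sol.split hk hb hc hf hw.continuousOn hx]
  exact e x hx

lemma Sol.zero {k : ℝ} (hk : 0 < k) (hk2 : k ≤ 2) {b c f w : ℝ → ℝ}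
    (hb : ContinuousOn b (Icc 0 1)) (hc : ContinuousOn c (Icc 0 1))
    (hf : ∀ t ∈ Icc (0:ℝ) 1, f t = 0) (h : Sol k b c f 0 0 w) : ∀ x ∈ Icc (0:ℝ) 1, w x = 0 := by
  apply volterra_unique hk hb hc hk2 h.1
  intro x hx
  rw [h.2 x hx, zero_add]
  unfold TT
  apply J_congr _ hx
  intro t ht
  unfold Sv
  rw [hf t ht]; ring

lemma Sol.reg {k : ℝ} (hk : 0 < k) (hk2 : k ≤ 2) {n : ℕ} {b c f w : ℝ → ℝ} {a β : ℝ}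
    (hb : Reg n b) (hc : Reg n c) (hf : Reg n f) (h : Sol k b c f a β w) : Reg n w := by
  refine volterra_reg hk hk2 n hb hc (F := fun x => β + Jp k (fun t => a * c t + (-1) * f t) x)
    ((Reg.const n β).add (Reg.J hk ((hc.smul a).add (hf.smul (-1))))) h.1 ?_
  intro x hx
  rw [h.2 x hx, Sol.split hk hb.cont hc.cont hf.cont h.1 hx]
  simp only [neg_one_mul]

lemma Sol.caputo {k : ℝ} (hk : 0 < k) (hk1 : k < 1) {b c f w : ℝ → ℝ} {a β : ℝ}
    (hb : Reg 1 b) (hc : Reg 1 c) (hf : Reg 1 f) (h : Sol k b c f a β w) :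
    ∃ z, Th w z ∧ (∃ C, ∀ t ∈ Icc (0:ℝ) 1, |z t| ≤ C * t ^ k) ∧ ∀ x ∈ Ioo (0:ℝ) 1,
      ∫ t in (0:ℝ)..x, (x - t) ^ (-k) * (z t / t)
        = Real.Gamma k * Real.Gamma (1 - k) * Sv b c f a w x := by
  have hw := Sol.reg hk (by linarith) hb hc hf h
  have hv := Sv_reg a hb hc hf hw
  have hv0 := hv.cont
  obtain ⟨z0, hT, hz0⟩ := hv
  have hT2 := (Th.const β).add (J_Th hk hT)
  set z := Jp k (fun t => k * Sv b c f a w t + z0 t) with hz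
  have hTw : Th w z := hT2.congr h.2 (fun t _ => by simp)
  have cz : ContinuousOn (fun t => k * Sv b c f a w t + z0 t) (Icc 0 1) :=
    (hT.1.const_mul k).add hT.2.1
  obtain ⟨M, hM0, hM⟩ := bdd_of_cont cz
  have hbd : ∀ t ∈ Icc (0:ℝ) 1, |z t| ≤ M / k * t ^ k := fun t ht =>
    J_bound hk ht (fun s hs => hM s ⟨hs.1, hs.2.trans ht.2⟩)
  refine ⟨z, hTw, ⟨_, hbd⟩, fun x hx => ?_⟩
  refine caputo_of_volterra hk hk1 hTw hk hbd hv0 ?_ hx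
  rw [h.init hk]
  exact h.2

lemma ker_zt_int {k : ℝ} (hk : 0 < k) (hk1 : k < 1) {z : ℝ → ℝ} (hz : ContinuousOn z (Icc 0 1))
    {C e : ℝ} (he : 0 < e) (hb : ∀ t ∈ Icc (0:ℝ) 1, |z t| ≤ C * t ^ e) {x : ℝ}
    (hx : x ∈ Ioc (0:ℝ) 1) :
    IntervalIntegrable (fun t => (x - t) ^ (-k) * (z t / t)) volume 0 x := by
  have h1 := (xt_int hk1 hz hx).const_mul x⁻¹
  have h2 : IntervalIntegrable (fun t => (x - t) ^ (1 - k) * (z t / t)) volume 0 x := by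
    apply (zt_int hz he hb hx).continuousOn_mul
    apply Continuous.continuousOn
    exact (Real.continuous_rpow_const (by linarith)).comp (continuous_const.sub continuous_id)
  have h3 := h1.add (h2.const_mul x⁻¹)
  refine h3.congr_ae ?_
  rw [uIoc_of_le hx.1.le]
  refine (ae_restrict_iff' measurableSet_Ioc).2 ?_
  have hne : ∀ᵐ t ∂(volume : Measure ℝ), t ≠ x := by
    simp [ae_iff, measure_singleton]
  filter_upwards [hne] with t htx ht
  have hxt : 0 < x - t := sub_pos.2 (lt_of_le_of_ne ht.2 htx)
  have hx0 := hx.1.ne'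
  have ht0 := ht.1.ne'
  rw [show 1 - k = -k + 1 by ring, Real.rpow_add_one hxt.ne']
  field_simp
  ring

lemma first_zero {k : ℝ} (hk : 0 < k) (hk1 : k < 1) {w z : ℝ → ℝ} (h : Th w z) {C e : ℝ}
    (he : 0 < e) (hb : ∀ t ∈ Icc (0:ℝ) 1, |z t| ≤ C * t ^ e) {x : ℝ} (hx : x ∈ Ioo (0:ℝ) 1)
    (hw0 : 0 < w 0) (hpos : ∀ t ∈ Ico 0 x, 0 < w t) (hwx : w x = 0) :
    ∫ t in (0:ℝ)..x, (x - t) ^ (-k) * (z t / t) < 0 := by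
  have hx' : x ∈ Ioc (0:ℝ) 1 := ⟨hx.1, hx.2.le⟩
  have hint := ker_zt_int hk hk1 h.2.1 he hb hx'
  set g : ℝ → ℝ := fun t => (x - t) ^ (-k) * w t with hg
  have gx : g x = 0 := by simp [hg, hwx]
  have hsub : Icc 0 x ⊆ Icc (0:ℝ) 1 := Icc_subset_Icc_right hx.2.le
  have gc : ContinuousOn g (Icc 0 x) := by
    intro t ht
    rcases ht.2.eq_or_lt with e1 | e1
    · subst e1
      unfold ContinuousWithinAt
      rw [gx]
      have hO := (h.2.2 t hx).differentiableAt.isBigO_sub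
      rw [hwx] at hO
      simp only [sub_zero] at hO
      obtain ⟨K, hK⟩ := hO.bound
      have h1 : Tendsto (fun s : ℝ => K * |t - s| ^ (1 - k)) (𝓝[Icc 0 t] t) (𝓝 0) := by
        have hcc : Continuous (fun s : ℝ => K * |t - s| ^ (1 - k)) := by
          apply continuous_const.mul
          exact (Real.continuous_rpow_const (by linarith)).comp
            (continuous_abs.comp (continuous_const.sub continuous_id))
        have h2 := hcc.tendsto t
        simp only [sub_self, abs_zero, Real.zero_rpow (show 1 - k ≠ 0 by linarith), mul_zero] at h2
        exact h2.mono_left nhdsWithin_le_nhds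
      apply squeeze_zero_norm' _ h1
      filter_upwards [self_mem_nhdsWithin, mem_nhdsWithin_of_mem_nhds hK] with s hs hK
      rcases hs.2.eq_or_lt with e2 | e2
      · rw [e2, gx]; simp [Real.zero_rpow (show 1 - k ≠ 0 by linarith)]
      · have hp : 0 < t - s := sub_pos.2 e2
        rw [hg]
        simp only [Real.norm_eq_abs] at hK ⊢
        rw [abs_mul, abs_of_pos (Real.rpow_pos_of_pos hp _), abs_of_pos hp]
        rw [abs_sub_comm, abs_of_pos hp] at hK
        calc (t - s) ^ (-k) * |w s| ≤ (t - s) ^ (-k) * (K * (t - s)) :=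
              mul_le_mul_of_nonneg_left hK (Real.rpow_pos_of_pos hp _).le
          _ = K * (t - s) ^ (1 - k) := by
              rw [show 1 - k = -k + 1 by ring, Real.rpow_add_one hp.ne']; ring
    · have hp : 0 < x - t := sub_pos.2 e1
      apply ContinuousWithinAt.mul
      · apply ContinuousAt.continuousWithinAt
        apply ContinuousAt.rpow_const (by fun_prop)
        exact Or.inl hp.ne'
      · exact (h.1 t (hsub ht)).mono hsub
  have key := integral_le_sub_of_hasDeriv_right_of_le hx.1.le gc
    (g' := fun t => k * (x - t) ^ (-k - 1) * w t + (x - t) ^ (-k) * (z t / t))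
    (φ := fun t => (x - t) ^ (-k) * (z t / t)) (by
      intro t ht
      have hp : 0 < x - t := sub_pos.2 ht.2
      have h1 : HasDerivAt (fun t : ℝ => x - t) (-1) t := by
        simpa using (hasDerivAt_id t).const_sub x
      have h2 := h1.rpow_const (p := -k) (Or.inl hp.ne')
      have h3 := h2.mul (h.2.2 t ⟨ht.1, ht.2.trans hx.2⟩)
      refine (h3.congr_deriv ?_).hasDerivWithinAt
      ring) (by
      rw [integrableOn_Icc_iff_integrableOn_Ioc]
      exact (intervalIntegrable_iff_integrableOn_Ioc_of_le hx.1.le).1 hint) (by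
      intro t ht
      have hp : 0 < x - t := sub_pos.2 ht.2
      have := hpos t ⟨ht.1.le, ht.2⟩
      have h1 := Real.rpow_pos_of_pos hp (-k - 1)
      have : 0 ≤ k * (x - t) ^ (-k - 1) * w t := by positivity
      linarith)
  rw [gx] at key
  have : 0 < g 0 := by
    simp only [hg, sub_zero]
    exact mul_pos (Real.rpow_pos_of_pos hx.1 _) hw0
  linarith

lemma phi_pos {k : ℝ} (hk : 0 < k) (hk1 : k < 1) {b c f w : ℝ → ℝ} {a : ℝ}
    (hb : Reg 1 b) (hc : Reg 1 c) (hf : Reg 1 f) (hf0 : ∀ t ∈ Icc (0:ℝ) 1, f t = 0)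
    (hc0 : ∀ t ∈ Icc (0:ℝ) 1, 0 ≤ c t) (ha : 0 < a)
    (h : Sol k b c f a 1 w) : ∀ x ∈ Icc (0:ℝ) 1, 0 ≤ w x := by
  obtain ⟨z, hT, ⟨C, hC⟩, hcap⟩ := Sol.caputo hk hk1 hb hc hf h
  have hw0 : w 0 = 1 := h.init hk
  have pos : ∀ x ∈ Ico (0:ℝ) 1, 0 < w x := by
    by_contra! hcon
    obtain ⟨y, hy, hwy⟩ := hcon
    let S := {t ∈ Icc (0:ℝ) y | w t ≤ 0}
    have hys : Icc 0 y ⊆ Icc (0:ℝ) 1 := Icc_subset_Icc_right hy.2.le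
    have hSc : IsCompact S := by
      have : S = Icc 0 y ∩ w ⁻¹' Iic 0 := by ext t; simp [S]
      rw [this]
      exact isCompact_Icc.of_isClosed_subset
        ((h.1.mono hys).preimage_isClosed_of_isClosed isClosed_Icc isClosed_Iic) inter_subset_left
    have hSn : S.Nonempty := ⟨y, ⟨hy.1, le_rfl⟩, hwy⟩
    obtain ⟨x, hxS, hmin⟩ := hSc.exists_isLeast hSn
    have hx0 : 0 < x := by
      rcases hxS.1.1.eq_or_lt with e | e
      · exfalso
        have := hxS.2
        rw [← e, hw0] at this
        linarith
      · exact e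
    have hx1 : x < 1 := lt_of_le_of_lt hxS.1.2 hy.2
    have hlt : ∀ t ∈ Ico 0 x, 0 < w t := by
      intro t ht
      by_contra! hn
      exact absurd (hmin ⟨⟨ht.1, ht.2.le.trans hxS.1.2⟩, hn⟩) (not_le.2 ht.2)
    have hxI : x ∈ Icc (0:ℝ) 1 := ⟨hx0.le, hx1.le⟩
    have hwx : w x = 0 := by
      apply le_antisymm hxS.2
      have hcl : x ∈ closure (Ico 0 x) := by
        rw [closure_Ico hx0.ne]; exact ⟨hx0.le, le_rfl⟩
      have hcw : ContinuousWithinAt w (Ico 0 x) x := (h.1 x hxI).mono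
        (fun t ht => ⟨ht.1, ht.2.le.trans hx1.le⟩)
      have : (𝓝[Ico 0 x] x).NeBot := mem_closure_iff_nhdsWithin_neBot.1 hcl
      refine ge_of_tendsto hcw ?_
      filter_upwards [self_mem_nhdsWithin] with t ht
      exact (hlt t ht).le
    have h1 := first_zero hk hk1 hT hk hC ⟨hx0, hx1⟩ (by rw [hw0]; exact one_pos) hlt hwx
    rw [hcap x ⟨hx0, hx1⟩] at h1
    have hJ : 0 ≤ Jp 1 w x := by
      rw [J1_eq hx0.le]
      apply integral_nonneg hx0.le
      intro t ht
      rcases ht.2.eq_or_lt with e | e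
      · rw [e, hwx]
      · exact (hlt t ⟨ht.1, e⟩).le
    have h2 : 0 ≤ Sv b c f a w x := by
      unfold Sv
      rw [hwx, hf0 x hxI]
      have := hc0 x hxI
      have : 0 ≤ c x * (a + Jp 1 w x) := by positivity
      linarith
    have g1 := Real.Gamma_pos_of_pos hk
    have g2 := Real.Gamma_pos_of_pos (show 0 < 1 - k by linarith)
    have : 0 ≤ Real.Gamma k * Real.Gamma (1 - k) * Sv b c f a w x := by positivity
    linarith
  intro x hx
  rcases hx.2.eq_or_lt with e | e
  · subst e
    have hcl : (1:ℝ) ∈ closure (Ico (0:ℝ) 1) := by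
      rw [closure_Ico zero_ne_one]; exact hx
    have : (𝓝[Ico (0:ℝ) 1] 1).NeBot := mem_closure_iff_nhdsWithin_neBot.1 hcl
    have hcw : ContinuousWithinAt w (Ico 0 1) 1 := (h.1 1 hx).mono Ico_subset_Icc_self
    refine ge_of_tendsto hcw ?_
    filter_upwards [self_mem_nhdsWithin] with t ht
    exact (pos t ht).le
  · exact (pos x ⟨hx.1, e⟩).le

lemma caputo_eq {δ : ℝ} {g z : ℝ → ℝ}
    (hz : ∀ t ∈ Ioo (0:ℝ) 1, derivWithin (derivWithin g (Icc 0 1)) (Icc 0 1) t = z t / t)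
    {x : ℝ} (hx : x ∈ Ioo (0:ℝ) 1) :
    caputoW δ g x = (1 / Real.Gamma (1 - (δ - 1))) *
      ∫ t in (0:ℝ)..x, (x - t) ^ (-(δ - 1)) * (z t / t) := by
  unfold caputoW
  rw [show 1 - (δ - 1) = 2 - δ by ring, show -(δ - 1) = 1 - δ by ring]
  congr 1
  apply intervalIntegral.integral_congr_ae
  refine Eventually.of_forall (fun t ht => ?_)
  rw [uIoc_of_le hx.1.le] at ht
  rw [hz t ⟨ht.1, lt_of_le_of_lt ht.2 hx.2⟩]

lemma dw_Th {w w' z : ℝ → ℝ} (h : Th w z) (e : ∀ t ∈ Icc (0:ℝ) 1, w' t = w t) {t : ℝ}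
    (ht : t ∈ Ioo (0:ℝ) 1) : derivWithin w' (Icc 0 1) t = z t / t := by
  have h' : Th w' z := h.congr e (fun _ _ => rfl)
  exact (h'.2.2 t ht).hasDerivWithinAt.derivWithin (udI t ⟨ht.1.le, ht.2.le⟩)

lemma g_side {g : ℝ → ℝ} (h1 : ContDiffOn ℝ 1 g (Icc 0 1)) (h2 : ContDiffOn ℝ 2 g (Ioc 0 1))
    {C' θ : ℝ} (hθ : θ ∈ Ioo (0:ℝ) 1)
    (hb : ∀ x ∈ Ioc (0:ℝ) 1,
          |derivWithin (derivWithin g (Icc 0 1)) (Icc 0 1) x| ≤ C' * x ^ (-θ)) :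
    ∃ z, Th (derivWithin g (Icc 0 1)) z ∧ (∀ t ∈ Icc (0:ℝ) 1, |z t| ≤ C' * t ^ (1 - θ)) ∧
      (∀ t ∈ Ioo (0:ℝ) 1, derivWithin (derivWithin g (Icc 0 1)) (Icc 0 1) t = z t / t) ∧
      (∀ x ∈ Icc (0:ℝ) 1, g x = g 0 + Jp 1 (derivWithin g (Icc 0 1)) x) := by
  set w := derivWithin g (Icc 0 1) with hw
  have cw : ContinuousOn w (Icc 0 1) := h1.continuousOn_derivWithin udI le_rfl
  have hθ' : 0 < 1 - θ := by linarith [hθ.2]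
  have e1 : iteratedDerivWithin 1 g (Icc 0 1) = w := by
    rw [iteratedDerivWithin_succ]; simp only [hw]; congr 1
  have e2 : iteratedDerivWithin 2 g (Icc 0 1) = derivWithin w (Icc 0 1) := by
    rw [iteratedDerivWithin_succ, e1]
  obtain ⟨k1, k2⟩ := chain_of (n := 2) (g := g) h2
  have c2 := k1 2 le_rfl
  have d2 := k2 1 (by norm_num)
  simp only [Nat.reduceAdd] at d2
  rw [e1, e2] at d2
  rw [e2] at c2
  have hbd : ∀ t ∈ Icc (0:ℝ) 1, |t * derivWithin w (Icc 0 1) t| ≤ C' * t ^ (1 - θ) := by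
    intro t ht
    rcases ht.1.eq_or_lt with h | h
    · rw [← h, Real.zero_rpow hθ'.ne']; simp
    · rw [abs_mul, abs_of_pos h, show 1 - θ = -θ + 1 by ring, Real.rpow_add_one h.ne']
      have := mul_le_mul_of_nonneg_left (hb t ⟨h, ht.2⟩) h.le
      linarith
  refine ⟨fun t => t * derivWithin w (Icc 0 1) t, ⟨cw, ?_, ?_⟩, hbd, ?_, ?_⟩
  · apply cont_pow_mul (C := C') hθ' _ (by simp) (fun t ht => hbd t (Ioc_subset_Icc_self ht))
    fun_prop
  · intro x hx
    refine (d2 x hx).congr_deriv ?_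
    have := hx.1.ne'
    field_simp
  · intro t ht
    have := ht.1.ne'
    field_simp
  · intro x hx
    have hs : Icc 0 x ⊆ Icc (0:ℝ) 1 := Icc_subset_Icc_right hx.2
    rw [J1_eq hx.1, integral_eq_sub_of_hasDerivAt_of_le hx.1 (h1.continuousOn.mono hs)]
    · ring
    · intro t ht
      have ht' : t ∈ Icc (0:ℝ) 1 := hs ⟨ht.1.le, ht.2.le⟩
      exact ((h1.differentiableOn one_ne_zero t ht').hasDerivWithinAt).hasDerivAt
        (Icc_mem_nhds ht.1 (lt_of_lt_of_le ht.2 hx.2))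
    · apply ContinuousOn.intervalIntegrable
      rw [uIcc_of_le hx.1]
      exact cw.mono hs

theorem stmt10 (δ : ℝ) (hδ1 : 1 < δ) (hδ2 : δ < 2)
    (q : ℕ) (hq : 2 ≤ q) (μ : ℝ) (hμ : μ ≤ 2 - δ)
    (b c f : ℝ → ℝ) (hb : CqNu q μ b) (hc : CqNu q μ c) (hf : CqNu q μ f)
    (hc0 : ∀ x ∈ Set.Icc (0:ℝ) 1, 0 ≤ c x)
    (α₀ α₁ γ₀ γ₁ : ℝ) (hα₀ : 1 / (δ - 1) ≤ α₀) (hα₁ : 0 ≤ α₁) :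
    ∃ u : ℝ → ℝ,
      ContDiffOn ℝ 1 u (Set.Icc 0 1) ∧
      ContDiffOn ℝ (q + 1) u (Set.Ioc 0 1) ∧
      (∀ x ∈ Set.Ioo (0:ℝ) 1,
        -caputoW δ u x + b x * derivWithin u (Set.Icc 0 1) x + c x * u x = f x) ∧
      (u 0 - α₀ * derivWithin u (Set.Icc 0 1) 0 = γ₀) ∧
      (u 1 + α₁ * derivWithin u (Set.Icc 0 1) 1 = γ₁) ∧
      (∃ C : ℝ, ∀ x ∈ Set.Ioc (0:ℝ) 1,
        (∀ i : ℕ, i ≤ 1 → |iteratedDerivWithin i u (Set.Icc 0 1) x| ≤ C) ∧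
        (∀ i : ℕ, 2 ≤ i → i ≤ q + 1 →
          |iteratedDerivWithin i u (Set.Icc 0 1) x| ≤ C * x ^ (δ - i))) ∧
      (∀ g : ℝ → ℝ, ContDiffOn ℝ 1 g (Set.Icc 0 1) → ContDiffOn ℝ 2 g (Set.Ioc 0 1) →
        (∃ C' > (0:ℝ), ∃ θ ∈ Set.Ioo (0:ℝ) 1, ∀ x ∈ Set.Ioc (0:ℝ) 1,
          |derivWithin (derivWithin g (Set.Icc 0 1)) (Set.Icc 0 1) x| ≤ C' * x ^ (-θ)) →
        (∀ x ∈ Set.Ioo (0:ℝ) 1,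
          -caputoW δ g x + b x * derivWithin g (Set.Icc 0 1) x + c x * g x = f x) →
        (g 0 - α₀ * derivWithin g (Set.Icc 0 1) 0 = γ₀) →
        (g 1 + α₁ * derivWithin g (Set.Icc 0 1) 1 = γ₁) →
        ∀ x ∈ Set.Icc (0:ℝ) 1, g x = u x) := by
  obtain ⟨k, hkd⟩ : ∃ k, k = δ - 1 := ⟨_, rfl⟩
  have hk : 0 < k := by linarith
  have hk1 : k < 1 := by linarith
  have hk2 : k ≤ 2 := by linarith
  have hk' : 0 < 1 - k := by linarith
  have g1 : 0 < Real.Gamma k := Real.Gamma_pos_of_pos hk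
  have g2 : 0 < Real.Gamma (1 - k) := Real.Gamma_pos_of_pos hk'
  have hα : 0 < α₀ := lt_of_lt_of_le (by rw [← hkd]; positivity) hα₀
  have rb := CqNu_reg hk hk1 (by linarith) (by omega) hb
  have rc := CqNu_reg hk hk1 (by linarith) (by omega) hc
  have rf := CqNu_reg hk hk1 (by linarith) (by omega) hf
  obtain ⟨B, hB⟩ : ∃ B : ℝ → ℝ, B = fun t => (Real.Gamma k)⁻¹ * b t := ⟨_, rfl⟩
  obtain ⟨E, hE⟩ : ∃ E : ℝ → ℝ, E = fun t => (Real.Gamma k)⁻¹ * c t := ⟨_, rfl⟩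
  obtain ⟨F, hF⟩ : ∃ F : ℝ → ℝ, F = fun t => (Real.Gamma k)⁻¹ * f t := ⟨_, rfl⟩
  obtain ⟨Z, hZ⟩ : ∃ Z : ℝ → ℝ, Z = fun _ => 0 := ⟨_, rfl⟩
  have RB : Reg q B := by rw [hB]; exact rb.smul _
  have RE : Reg q E := by rw [hE]; exact rc.smul _
  have RF : Reg q F := by rw [hF]; exact rf.smul _
  have RZ : Reg q Z := by rw [hZ]; exact Reg.const q 0
  have hq1 : 1 ≤ q := by omega
  have gam : ∀ (a : ℝ) (w : ℝ → ℝ) (x : ℝ), Real.Gamma k * Sv B E F a w x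
      = b x * w x + c x * (a + Jp 1 w x) - f x := by
    intro a w x
    unfold Sv
    rw [hB, hE, hF]
    have := g1.ne'
    field_simp
    ring
  obtain ⟨p, cp, sp⟩ := Sol.exists (f := Z) hk hk2 α₀ 1 RB.cont RE.cont RZ.cont
  obtain ⟨w0, cw0, sw0⟩ := Sol.exists (f := F) hk hk2 γ₀ 0 RB.cont RE.cont RF.cont
  have hp := phi_pos hk hk1 (RB.mono hq1) (RE.mono hq1) (RZ.mono hq1)
    (fun t _ => by rw [hZ]) (fun t ht => by
      rw [hE]; exact mul_nonneg (inv_pos.2 g1).le (hc0 t ht)) hα sp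
  have I1 : (1:ℝ) ∈ Set.Icc (0:ℝ) 1 := ⟨zero_le_one, le_rfl⟩
  have I0 : (0:ℝ) ∈ Set.Icc (0:ℝ) 1 := ⟨le_rfl, zero_le_one⟩
  have hJp : 0 ≤ Jp 1 p 1 := by
    rw [J1_eq zero_le_one]
    exact intervalIntegral.integral_nonneg zero_le_one (fun t ht => hp t ht)
  obtain ⟨P, hP⟩ : ∃ P, P = α₀ + Jp 1 p 1 + α₁ * p 1 := ⟨_, rfl⟩
  have hP0 : 0 < P := by
    have := mul_nonneg hα₁ (hp 1 I1)
    linarith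
  obtain ⟨β, hβ⟩ : ∃ β, β = (γ₁ - (γ₀ + Jp 1 w0 1 + α₁ * w0 1)) / P := ⟨_, rfl⟩
  have su0 := Sol.lin hk RB.cont RE.cont RF.cont RZ.cont β sw0 sp
  obtain ⟨w, hw⟩ : ∃ w : ℝ → ℝ, w = fun t => w0 t + β * p t := ⟨_, rfl⟩
  have cw : Continuous w := by rw [hw]; fun_prop
  have su : Sol k B E F (γ₀ + β * α₀) β w := by
    rw [hw]
    have e1 : (fun t => F t + β * Z t) = F := by funext t; rw [hZ]; ring
    have e2 : (0:ℝ) + β * 1 = β := by ring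
    rw [e1, e2] at su0
    exact su0
  have Jw : ∀ x ∈ Set.Icc (0:ℝ) 1, Jp 1 w x = Jp 1 w0 x + β * Jp 1 p x := by
    intro x hx
    rw [hw]
    exact J_lin one_pos β cw0.continuousOn cp.continuousOn hx
  obtain ⟨u, hu⟩ : ∃ u : ℝ → ℝ, u = fun x => (γ₀ + β * α₀) + ∫ t in (0:ℝ)..x, w t := ⟨_, rfl⟩
  have du : ∀ x, HasDerivAt u (w x) x := by
    intro x
    rw [hu]
    exact (cw.integral_hasStrictDerivAt 0 x).hasDerivAt.const_add _
  have eu : ∀ x ∈ Set.Icc (0:ℝ) 1, u x = (γ₀ + β * α₀) + Jp 1 w x := by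
    intro x hx
    rw [J1_eq hx.1, hu]
  have dwu : ∀ x ∈ Set.Icc (0:ℝ) 1, derivWithin u (Set.Icc 0 1) x = w x :=
    fun x hx => (du x).hasDerivWithinAt.derivWithin (udI x hx)
  have u0 : u 0 = γ₀ + β * α₀ := by rw [eu 0 I0, J_zero one_pos, add_zero]
  have hwi : w 0 = β := su.init hk
  have Rw := Sol.reg hk hk2 RB RE RF su
  have Rv := Sv_reg (γ₀ + β * α₀) RB RE RF Rw
  have hu1 : u 1 + α₁ * w 1 = γ₁ := by
    rw [eu 1 I1, Jw 1 I1]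
    have hwe : w 1 = w0 1 + β * p 1 := by rw [hw]
    have : β * P = γ₁ - (γ₀ + Jp 1 w0 1 + α₁ * w0 1) := by
      rw [hβ]; field_simp
    rw [hP] at this
    rw [hwe]
    linarith
  obtain ⟨R1, C, R2⟩ := u_reg (u := u) hk hq1 Rv cw.continuousOn su.2 eu
  refine ⟨u, ?_, ?_, ?_, ?_, ?_, ?_, ?_⟩
  · apply ContDiff.contDiffOn
    rw [contDiff_one_iff_deriv]
    refine ⟨fun x => (du x).differentiableAt, ?_⟩
    have : deriv u = w := funext (fun x => (du x).deriv)
    rw [this]; exact cw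
  · exact_mod_cast R1
  · intro x hx
    obtain ⟨z, hT, _, hcap⟩ := Sol.caputo hk hk1 (RB.mono hq1) (RE.mono hq1) (RF.mono hq1) su
    have hxI : x ∈ Set.Icc (0:ℝ) 1 := ⟨hx.1.le, hx.2.le⟩
    rw [caputo_eq (z := z) (fun t ht => dw_Th hT dwu ht) hx, ← hkd, hcap x hx, dwu x hxI]
    have h := gam (γ₀ + β * α₀) w x
    rw [← eu x hxI] at h
    have e : 1 / Real.Gamma (1 - k) * (Real.Gamma k * Real.Gamma (1 - k) *
        Sv B E F (γ₀ + β * α₀) w x) = Real.Gamma k * Sv B E F (γ₀ + β * α₀) w x := by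
      have := g2.ne'
      field_simp
    rw [e, h]
    ring
  · rw [dwu 0 I0, u0, hwi]; ring
  · rw [dwu 1 I1]; exact hu1
  · refine ⟨C, fun x hx => ⟨(R2 x hx).1, fun i hi hiq => ?_⟩⟩
    have := (R2 x hx).2 i hi hiq
    rw [hkd, sub_add_cancel] at this
    exact this
  · rintro g hg1 hg2 ⟨C', _, θ, hθ, hgb⟩ heq hg0 hgL
    obtain ⟨z, hT, hzb, hz, eg⟩ := g_side hg1 hg2 hθ hgb
    obtain ⟨y, hy⟩ : ∃ y, y = derivWithin g (Set.Icc 0 1) := ⟨_, rfl⟩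
    rw [← hy] at hT eg
    have sg : Sol k B E F (g 0) (y 0) y := by
      refine ⟨hT.1, ?_⟩
      refine volterra_of_caputo hk hk1 hT (show 0 < 1 - θ by linarith [hθ.2]) hzb
        (Sv_cont _ RB.cont RE.cont RF.cont hT.1) ?_
      intro x hx
      have hxI : x ∈ Set.Icc (0:ℝ) 1 := ⟨hx.1.le, hx.2.le⟩
      have h1 := heq x hx
      rw [caputo_eq (z := z) hz hx, ← hkd, ← hy] at h1
      have h := gam (g 0) y x
      rw [← eg x hxI] at h
      rw [mul_assoc, mul_left_comm, h]
      have := g2.ne'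
      field_simp at h1 ⊢
      linarith
    obtain ⟨s, hs⟩ : ∃ s, s = y 0 - β := ⟨_, rfl⟩
    rw [← hy] at hg0 hgL
    have hd := Sol.lin hk RB.cont RE.cont (RF.cont.add (RF.cont.const_mul (-1))) RZ.cont (-s)
      (Sol.lin hk RB.cont RE.cont RF.cont RF.cont (-1) sg su) sp
    have ea : g 0 + -1 * (γ₀ + β * α₀) + -s * α₀ = 0 := by rw [hs]; linarith
    have eb : y 0 + -1 * β + -s * 1 = 0 := by rw [hs]; ring
    rw [ea, eb] at hd
    have hd0 := Sol.zero hk hk2 RB.cont RE.cont (fun t _ => by simp [hZ]) hd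
    have ey : ∀ x ∈ Set.Icc (0:ℝ) 1, y x = w x + s * p x := by
      intro x hx
      have := hd0 x hx
      linarith
    have egu : ∀ x ∈ Set.Icc (0:ℝ) 1, g x - u x = s * (α₀ + Jp 1 p x) := by
      intro x hx
      rw [eg x hx, eu x hx, J_congr ey hx, J_lin one_pos s cw.continuousOn cp.continuousOn hx]
      linarith
    have hs0 : s * P = 0 := by
      have h1 := egu 1 I1
      have h2 := ey 1 I1
      rw [h2] at hgL
      rw [hP]
      linarith
    have hs0 : s = 0 := by
      rcases mul_eq_zero.1 hs0 with h | h
      · exact h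
      · exact absurd h hP0.ne'
    intro x hx
    have := egu x hx
    rw [hs0, zero_mul] at this
    linarith
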